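/- arXiv:2303.00418 — 6 statements merged into one kernel-verified Lean document; each statement's English description precedes it below -/
import Mathlib

section
/- Let L be a finite-dimensional Leibniz algebra over a field of characteristic zero in which every Cartan subalgebra of L is a weak c-ideal of L. Then L is solvable. -/
/-! The heart of the matter is that, when `a` is chosen so that `H = L₀(R_a)` is a Cartan subalgebra
(`R_a` is right multiplication by `a`, and `₀` denotes the Fitting null component), the
decomposition `L = H + C` pushes all of `H ∩ L^(k)` into the core of `H` for large `k`.

Let `G` be `L` modulo its Leibniz kernel, taken with the opposite bracket, so that `G` is a Lie
algebra which acts on `L` by right multiplications.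

* Existence of `H` (`exists_cartan`). A Cartan subalgebra of the semidirect sum of `G` with the
  abelian Lie algebra `L` has the form `engel t`. If `a` lifts the `G`-component of `t`, then
  `L₀(R_a)` is nilpotent: its image in `G` acts on it through `engel t`. It is self-normalizing
  because `a` is congruent modulo the Leibniz kernel to an element of `L₀(R_a)`.
* The subideal `C` contains a term `D` of the derived series of `L`: in the chain from `C` to `L`
  each factor is a quotient of a subalgebra of the nilpotent algebra `H`
  (`exists_derSeriesOf_le_subideal`).
* Let `S` be `G` modulo its radical. The core of `H` is a nilpotent ideal, so it maps to zero
  in `S`. As `S` is perfect, `D` maps onto `S`, and since Fitting null components map onto Fitting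
  null components (`exists_mem_fittingNull`), the null component of `ad a` on `S` is the image
  of `D ∩ H ⊆ C ∩ H`, hence of the core, hence zero. That null component contains the image
  of `a`, so `ad a = 0` on `S`, and the null component is all of `S`. Thus `S = 0`, and `G` is
  solvable (`isSolvable_of_cartan_weakCIdeal`). The Leibniz kernel has zero bracket, so `L` is
  solvable too.
-/

open Submodule

variable {F : Type*} [Field F] {L : Type*} [AddCommGroup L] [Module F L]

/-- `br` is a (right) Leibniz bracket: the right multiplications are derivations. -/
def IsLeibnizBracket (br : L →ₗ[F] L →ₗ[F] L) : Prop :=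
  ∀ x y z : L, br x (br y z) = br (br x y) z - br (br x z) y

/-- A symmetric Leibniz bracket: right and left Leibniz, and `[[x,y],[x,y]] = 0`. -/
def IsSymmetricLeibnizBracket (br : L →ₗ[F] L →ₗ[F] L) : Prop :=
  IsLeibnizBracket br ∧
  (∀ x y z : L, br x (br y z) = br (br x y) z + br y (br x z)) ∧
  (∀ x y : L, br (br x y) (br x y) = 0)

/-- `B` is a subalgebra (a submodule closed under the bracket). -/
def IsSubalg (br : L →ₗ[F] L →ₗ[F] L) (B : Submodule F L) : Prop :=
  ∀ x ∈ B, ∀ y ∈ B, br x y ∈ B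

/-- `A` is an ideal of the subalgebra `B`. -/
def IsIdealOf (br : L →ₗ[F] L →ₗ[F] L) (A B : Submodule F L) : Prop :=
  A ≤ B ∧ ∀ x ∈ A, ∀ y ∈ B, br x y ∈ A ∧ br y x ∈ A

/-- `A` is an ideal of `L`. -/
def IsLeibIdeal (br : L →ₗ[F] L →ₗ[F] L) (A : Submodule F L) : Prop :=
  IsIdealOf br A ⊤

/-- `C` is a subideal of the subalgebra `K`: there is a chain
`C = C_0 ⊆ C_1 ⊆ ... ⊆ C_n = K` with each term an ideal of the next. -/
def IsSubidealOf (br : L →ₗ[F] L →ₗ[F] L) (C K : Submodule F L) : Prop :=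
  ∃ (n : ℕ) (ch : ℕ → Submodule F L), ch 0 = C ∧ ch n = K ∧
    ∀ i < n, IsIdealOf br (ch i) (ch (i + 1))

/-- `C` is a subideal of `L`. -/
def IsSubideal (br : L →ₗ[F] L →ₗ[F] L) (C : Submodule F L) : Prop :=
  IsSubidealOf br C ⊤

/-- The core of `B` in the subalgebra `K`: the largest ideal of `K` contained in `B`. -/
def leibCoreIn (br : L →ₗ[F] L →ₗ[F] L) (K B : Submodule F L) : Submodule F L :=
  sSup {A | IsIdealOf br A K ∧ A ≤ B}

/-- `B_L`, the largest ideal of `L` contained in `B`. -/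
def leibCore (br : L →ₗ[F] L →ₗ[F] L) (B : Submodule F L) : Submodule F L :=
  leibCoreIn br ⊤ B

/-- `B` is a c-ideal of `L`. -/
def IsCIdeal (br : L →ₗ[F] L →ₗ[F] L) (B : Submodule F L) : Prop :=
  IsSubalg br B ∧ ∃ K, IsLeibIdeal br K ∧ B ⊔ K = ⊤ ∧ B ⊓ K ≤ leibCore br B

/-- `B` is a weak c-ideal of the subalgebra `K`. -/
def IsWeakCIdealOf (br : L →ₗ[F] L →ₗ[F] L) (B K : Submodule F L) : Prop :=
  IsSubalg br B ∧ B ≤ K ∧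
    ∃ C, IsSubidealOf br C K ∧ B ⊔ C = K ∧ B ⊓ C ≤ leibCoreIn br K B

/-- `B` is a weak c-ideal of `L`. -/
def IsWeakCIdeal (br : L →ₗ[F] L →ₗ[F] L) (B : Submodule F L) : Prop :=
  IsWeakCIdealOf br B ⊤

/-- The Leibniz kernel `I`, spanned by all squares. -/
def leibnizKernel (br : L →ₗ[F] L →ₗ[F] L) : Submodule F L :=
  Submodule.span F {y | ∃ x : L, y = br x x}

/-- The span of all brackets `[a,b]` with `a ∈ A`, `b ∈ B`. -/
def brSpan (br : L →ₗ[F] L →ₗ[F] L) (A B : Submodule F L) : Submodule F L :=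
  Submodule.span F {z | ∃ x ∈ A, ∃ y ∈ B, z = br x y}

/-- The derived series of the subalgebra `U`. -/
def derSeriesOf (br : L →ₗ[F] L →ₗ[F] L) (U : Submodule F L) : ℕ → Submodule F L
  | 0 => U
  | n + 1 => brSpan br (derSeriesOf br U n) (derSeriesOf br U n)

/-- The subalgebra `U` is solvable. -/
def IsSolvableSub (br : L →ₗ[F] L →ₗ[F] L) (U : Submodule F L) : Prop :=
  ∃ n, derSeriesOf br U n = ⊥

/-- The lower central series of the subalgebra `U`. -/
def lcsOf (br : L →ₗ[F] L →ₗ[F] L) (U : Submodule F L) : ℕ → Submodule F L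
  | 0 => U
  | n + 1 => brSpan br (lcsOf br U n) U

/-- The subalgebra `U` is nilpotent. -/
def IsNilpotentSub (br : L →ₗ[F] L →ₗ[F] L) (U : Submodule F L) : Prop :=
  ∃ n, lcsOf br U n = ⊥

/-- `M` is a maximal (proper) subalgebra of the subalgebra `U`. -/
def IsMaximalSubalgOf (br : L →ₗ[F] L →ₗ[F] L) (M U : Submodule F L) : Prop :=
  IsSubalg br M ∧ M < U ∧ ∀ K, IsSubalg br K → M ≤ K → K ≤ U → K = M ∨ K = U

/-- `M` is a maximal subalgebra of `L`. -/
def IsMaximalSubalg (br : L →ₗ[F] L →ₗ[F] L) (M : Submodule F L) : Prop :=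
  IsMaximalSubalgOf br M ⊤

/-- `U` is a maximal nilpotent subalgebra of `L`. -/
def IsMaximalNilpotentSub (br : L →ₗ[F] L →ₗ[F] L) (U : Submodule F L) : Prop :=
  IsSubalg br U ∧ IsNilpotentSub br U ∧
    ∀ V, IsSubalg br V → IsNilpotentSub br V → U ≤ V → V = U

/-- `H` is a Cartan subalgebra of the subalgebra `S`: a nilpotent subalgebra
that is self-normalizing in `S`. -/
def IsCartanSubalgOf (br : L →ₗ[F] L →ₗ[F] L) (H S : Submodule F L) : Prop :=
  IsSubalg br H ∧ H ≤ S ∧ IsNilpotentSub br H ∧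
    ∀ x ∈ S, (∀ c ∈ H, br x c ∈ H ∧ br c x ∈ H) → x ∈ H

/-- `H` is a Cartan subalgebra of `L`. -/
def IsCartanSubalg (br : L →ₗ[F] L →ₗ[F] L) (H : Submodule F L) : Prop :=
  IsCartanSubalgOf br H ⊤

/-- The Frattini subalgebra of the subalgebra `C`:
the intersection of the maximal subalgebras of `C`. -/
def frattiniIn (br : L →ₗ[F] L →ₗ[F] L) (C : Submodule F L) : Submodule F L :=
  sInf {M | IsMaximalSubalgOf br M C}

/-- The Frattini subalgebra `F(L)`. -/
def frattiniSubalg (br : L →ₗ[F] L →ₗ[F] L) : Submodule F L :=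
  frattiniIn br ⊤

/-- The Frattini ideal `φ(L)`. -/
def frattiniIdeal (br : L →ₗ[F] L →ₗ[F] L) : Submodule F L :=
  leibCore br (frattiniSubalg br)

/-- `L` is supersolvable: there is a chain of ideals of `L` from `0` to `L`
each of codimension one in the next. -/
def IsSupersolvable (br : L →ₗ[F] L →ₗ[F] L) : Prop :=
  ∃ (n : ℕ) (ch : ℕ → Submodule F L), ch 0 = ⊥ ∧ ch n = ⊤ ∧
    (∀ i ≤ n, IsLeibIdeal br (ch i)) ∧
    ∀ i < n, ch i ≤ ch (i + 1) ∧
      Module.finrank F (ch (i + 1)) = Module.finrank F (ch i) + 1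

/-- A subalgebra is abelian if all brackets of its elements vanish. -/
def IsAbelianSub (br : L →ₗ[F] L →ₗ[F] L) (A : Submodule F L) : Prop :=
  ∀ x ∈ A, ∀ y ∈ A, br x y = 0

/-- `A` is a minimal abelian ideal of `L`. -/
def IsMinimalAbelianIdeal (br : L →ₗ[F] L →ₗ[F] L) (A : Submodule F L) : Prop :=
  IsLeibIdeal br A ∧ A ≠ ⊥ ∧ IsAbelianSub br A ∧
    ∀ A', IsLeibIdeal br A' → A' ≤ A → A' = ⊥ ∨ A' = A

/-- The abelian socle `Asoc(L)`: the sum of the minimal abelian ideals of `L`. -/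
def abelianSocle (br : L →ₗ[F] L →ₗ[F] L) : Submodule F L :=
  sSup {A | IsMinimalAbelianIdeal br A}

theorem isLeibIdeal_sSup (br : L →ₗ[F] L →ₗ[F] L) (S : Set (Submodule F L))
    (h : ∀ A ∈ S, IsLeibIdeal br A) : IsLeibIdeal br (sSup S) := by
  refine ⟨le_top, fun x hx y _ => ?_⟩
  let P : Submodule F L :=
    { carrier := {a | br a y ∈ sSup S ∧ br y a ∈ sSup S}
      zero_mem' := by simp
      add_mem' := by
        rintro a b ⟨ha1, ha2⟩ ⟨hb1, hb2⟩
        constructor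
        · simpa [map_add, LinearMap.add_apply] using add_mem ha1 hb1
        · simpa [map_add] using add_mem ha2 hb2
      smul_mem' := by
        rintro c a ⟨ha1, ha2⟩
        constructor
        · simpa [map_smul, LinearMap.smul_apply] using smul_mem _ c ha1
        · simpa [map_smul] using smul_mem _ c ha2 }
  have hP : sSup S ≤ P := by
    refine sSup_le fun A hA a ha => ?_
    exact ⟨le_sSup hA ((h A hA).2 a ha y trivial).1,
           le_sSup hA ((h A hA).2 a ha y trivial).2⟩
  exact hP hx

theorem leibCore_isIdeal (br : L →ₗ[F] L →ₗ[F] L) (B : Submodule F L) :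
    IsLeibIdeal br (leibCore br B) :=
  isLeibIdeal_sSup br _ fun _ hA => hA.1

/-- The bracket induced on the quotient of `L` by an ideal `A`. -/
def quotBr (br : L →ₗ[F] L →ₗ[F] L) (A : Submodule F L) (hA : IsLeibIdeal br A) :
    (L ⧸ A) →ₗ[F] (L ⧸ A) →ₗ[F] (L ⧸ A) :=
  Submodule.liftQ A
    { toFun := fun x => Submodule.liftQ A (A.mkQ.comp (br x))
        (fun a ha => by
          simp only [LinearMap.mem_ker, LinearMap.comp_apply, Submodule.mkQ_apply,
            Submodule.Quotient.mk_eq_zero]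
          exact (hA.2 a ha x trivial).2)
      map_add' := fun x y => by
        apply Submodule.linearMap_qext
        ext z
        simp [map_add]
      map_smul' := fun c x => by
        apply Submodule.linearMap_qext
        ext z
        simp [map_smul] }
    (fun a ha => by
      simp only [LinearMap.mem_ker]
      apply Submodule.linearMap_qext
      ext z
      simp only [LinearMap.coe_mk, AddHom.coe_mk, LinearMap.comp_apply, Submodule.mkQ_apply,
        Submodule.liftQ_apply, LinearMap.zero_comp, LinearMap.zero_apply,
        Submodule.Quotient.mk_eq_zero]
      exact (hA.2 a ha z trivial).1)

/-! ### Fitting null components -/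

/-- A linear map intertwining two endomorphisms maps the Fitting null component of an invariant
subspace `P` onto the Fitting null component of the image of `P`. -/
theorem exists_mem_fittingNull {V W : Type*} [AddCommGroup V] [Module F V]
    [FiniteDimensional F V] [AddCommGroup W] [Module F W] [FiniteDimensional F W]
    (f : V →ₗ[F] W) (φ : Module.End F V) (ψ : Module.End F W) (hf : ∀ v, f (φ v) = ψ (f v))
    (P : Submodule F V) (hP : ∀ p ∈ P, φ p ∈ P) {w : W} (hw : w ∈ ψ.maxGenEigenspace 0)
    (hwP : w ∈ P.map f) : ∃ p ∈ P, p ∈ φ.maxGenEigenspace 0 ∧ f p = w := by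
  have hfn : ∀ n v, f ((φ ^ n) v) = (ψ ^ n) (f v) := by
    intro n
    induction n with
    | zero => simp
    | succ n ih => intro v; rw [pow_succ, pow_succ, Module.End.mul_apply, ih, hf]; rfl
  simp only [Module.End.mem_maxGenEigenspace, zero_smul, sub_zero] at hw ⊢
  obtain ⟨m, hm⟩ := hw
  obtain ⟨p, hp, rfl⟩ := hwP
  let φP : Module.End F P := φ.restrict hP
  have hφP : ∀ n (q : P), ((φP ^ n) q : V) = (φ ^ n) q := by
    intro n q
    rw [Module.End.pow_restrict]
    rfl
  obtain ⟨n, ⟨hn, hψ⟩, hmn⟩ := ((φP.eventually_isCompl_ker_pow_range_pow.and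
    ψ.eventually_iSup_ker_pow_eq).and (Filter.eventually_ge_atTop m)).exists
  have hdec : (⟨p, hp⟩ : P) ∈ LinearMap.ker (φP ^ n) ⊔ LinearMap.range (φP ^ n) := by
    rw [hn.sup_eq_top]; trivial
  obtain ⟨a, ha, b, ⟨u, rfl⟩, hab⟩ := Submodule.mem_sup.1 hdec
  have ha' : (φ ^ n) (a : V) = 0 := by
    rw [← hφP, LinearMap.mem_ker.1 ha]; rfl
  have hp' : p = a + (φ ^ n) (u : V) := by
    rw [← hφP]; exact (congrArg Subtype.val hab).symm
  refine ⟨a, a.2, ⟨n, ha'⟩, ?_⟩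
  have h1 : (ψ ^ n) ((ψ ^ n) (f u)) = 0 := by
    rw [← hfn, show (φ ^ n) (u : V) = p - a by rw [hp']; abel, map_sub, map_sub,
      ← hfn n (a : V), ha', map_zero, sub_zero]
    exact Module.End.pow_map_zero_of_le hmn hm
  have h2 : (ψ ^ n) (f u) = 0 := by
    have : f u ∈ ⨆ k, LinearMap.ker (ψ ^ k) := by
      refine Submodule.mem_iSup_of_mem (n + n) ?_
      rw [LinearMap.mem_ker, pow_add]
      exact h1
    rw [hψ] at this
    exact this
  rw [hp', map_add, hfn, h2, add_zero]

/-- A Lie algebra `G` acting on a finite-dimensional space `V` has an element `g` for which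
`engel g` acts nilpotently on the Fitting null component of `g` in `V`. It comes from
a Cartan subalgebra of the semidirect sum of `G` with the abelian Lie algebra `V`. -/
theorem exists_engel_nilpotent {G V : Type*} [Infinite F] [LieRing G] [LieAlgebra F G]
    [FiniteDimensional F G] [LieRing V] [LieAlgebra F V] [IsLieAbelian V] [FiniteDimensional F V]
    (ρ : G →ₗ[F] Module.End F V) (hρ : ∀ g h v, ρ ⁅g, h⁆ v = ρ g (ρ h v) - ρ h (ρ g v)) :
    ∃ g : G, ∀ U : ℕ → Submodule F V, U 0 ≤ (ρ g).maxGenEigenspace 0 →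
      (∀ k, U (k + 1) ≤
        Submodule.span F {z | ∃ x ∈ U k, ∃ h ∈ LieSubalgebra.engel F g, z = ρ h x}) →
      ∃ k, U k = ⊥ := by
  let ψ : G →ₗ⁅F⁆ LieDerivation F V V :=
    { toFun := fun g => ⟨ρ g, fun a b => by simp [trivial_lie_zero]⟩
      map_add' := fun a b => by ext; simp
      map_smul' := fun a b => by ext; simp
      map_lie' := fun {a b} => by
        ext v
        rw [LieDerivation.lie_apply]
        exact hρ a b v }
  have hψ : ∀ g v, ψ g v = ρ g v := fun _ _ => rfl
  let T := LieAlgebra.SemiDirectSum V G ψ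
  have : FiniteDimensional F T :=
    (LieAlgebra.SemiDirectSum.toProdl ψ).symm.finiteDimensional
  obtain ⟨t, ht⟩ := LieAlgebra.exists_isCartanSubalgebra_engel F T
  refine ⟨t.right, fun U hU0 hU => ?_⟩
  have hnil := ht.nilpotent
  set E := LieSubalgebra.engel F t with hE
  -- The null component of `t` maps onto that of its component in `G`.
  have hlift : ∀ h ∈ LieSubalgebra.engel F t.right, ∃ e : E, (e : T).right = h := by
    intro h hh
    obtain ⟨p, -, hp, hpe⟩ := exists_mem_fittingNull
      (LieAlgebra.SemiDirectSum.projr ψ : T →ₗ[F] G) (LieAlgebra.ad F T t)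
      (LieAlgebra.ad F G t.right) (fun v => rfl) ⊤ (fun _ _ => trivial) (w := h) hh
      ⟨⟨0, h⟩, trivial, rfl⟩
    exact ⟨⟨p, hp⟩, hpe⟩
  have hinl : ∀ x ∈ (ρ t.right).maxGenEigenspace 0, (⟨x, 0⟩ : T) ∈ E := by
    intro x hx
    rw [LieSubalgebra.mem_engel_iff]
    simp only [Module.End.mem_maxGenEigenspace, zero_smul, sub_zero] at hx
    obtain ⟨n, hn⟩ := hx
    refine ⟨n, ?_⟩
    have key : ∀ n x, ((LieAlgebra.ad F T t) ^ n) (⟨x, 0⟩ : T) = ⟨(ρ t.right ^ n) x, 0⟩ := by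
      intro n
      induction n with
      | zero => intro x; rfl
      | succ n ih =>
        intro x
        rw [pow_succ, pow_succ, Module.End.mul_apply, Module.End.mul_apply, ← ih]
        congr 1
        rw [LieAlgebra.ad_apply, LieAlgebra.SemiDirectSum.lie_eq_mk]
        simp [hψ, trivial_lie_zero]
    rw [key, hn]
    rfl
  obtain ⟨k, hk⟩ := (LieModule.isNilpotent_iff F E E).1 hnil
  refine ⟨k, ?_⟩
  let ι : V →ₗ[F] T := (LieAlgebra.SemiDirectSum.inl ψ : V →ₗ[F] T)
  have main : ∀ k, U k ≤ ((LieModule.lowerCentralSeries F E E k).toSubmodule.map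
      E.toSubmodule.subtype).comap ι := by
    intro k
    induction k with
    | zero =>
      intro x hx
      exact ⟨⟨⟨x, 0⟩, hinl x (hU0 hx)⟩, by simp, rfl⟩
    | succ k ih =>
      refine (hU k).trans (Submodule.span_le.2 ?_)
      rintro _ ⟨x, hx, h, hh, rfl⟩
      obtain ⟨y, hy, hyx⟩ := ih hx
      obtain ⟨e, rfl⟩ := hlift h hh
      refine ⟨⁅e, y⁆, ?_, ?_⟩
      · rw [LieModule.lowerCentralSeries_succ]
        exact LieSubmodule.lie_mem_lie trivial hy
      · change ⁅(e : T), (y : T)⁆ = _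
        replace hyx : (y : T) = ⟨x, 0⟩ := hyx
        rw [hyx]
        change ⁅(e : T), (⟨x, 0⟩ : T)⁆ = ⟨ρ (e : T).right x, 0⟩
        rw [LieAlgebra.SemiDirectSum.lie_eq_mk]
        simp [hψ, trivial_lie_zero]
  rw [eq_bot_iff]
  intro x hx
  obtain ⟨y, hy, hyx⟩ := main k hx
  rw [hk] at hy
  replace hy : y = 0 := by simpa using hy
  subst hy
  have := congrArg LieAlgebra.SemiDirectSum.left hyx
  exact this.symm

/-- The zero bracket on a vector space. -/
@[reducible] def zeroLieRing (V : Type*) [AddCommGroup V] : LieRing V where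
  bracket _ _ := 0
  add_lie _ _ _ := by simp
  lie_add _ _ _ := by simp
  lie_self _ := rfl
  leibniz_lie _ _ _ := by simp

/-- `exists_engel_nilpotent` for a module `V` carrying no bracket. -/
theorem exists_engel_nilpotent' {G V : Type*} [Infinite F] [LieRing G] [LieAlgebra F G]
    [FiniteDimensional F G] [AddCommGroup V] [Module F V] [FiniteDimensional F V]
    (ρ : G →ₗ[F] Module.End F V) (hρ : ∀ g h v, ρ ⁅g, h⁆ v = ρ g (ρ h v) - ρ h (ρ g v)) :
    ∃ g : G, ∀ U : ℕ → Submodule F V, U 0 ≤ (ρ g).maxGenEigenspace 0 →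
      (∀ k, U (k + 1) ≤
        Submodule.span F {z | ∃ x ∈ U k, ∃ h ∈ LieSubalgebra.engel F g, z = ρ h x}) →
      ∃ k, U k = ⊥ := by
  let _ : LieRing V := zeroLieRing V
  let _ : LieAlgebra F V := { lie_smul := fun t x y => (smul_zero t).symm }
  have : IsLieAbelian V := ⟨fun _ _ => rfl⟩
  exact exists_engel_nilpotent ρ hρ

/-! ### Cartan subalgebras -/

/-- The Fitting null component of a right multiplication is a subalgebra. -/
theorem isSubalg_fittingNull {br : L →ₗ[F] L →ₗ[F] L} (hbr : IsLeibnizBracket br) (a : L) :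
    IsSubalg br (Module.End.maxGenEigenspace (br.flip a) 0) := by
  intro x hx y hy
  simp only [Module.End.mem_maxGenEigenspace, zero_smul, sub_zero] at hx hy ⊢
  obtain ⟨m, hm⟩ := hx
  obtain ⟨n, hn⟩ := hy
  have key : ∀ k m n : ℕ, m + n ≤ k → ∀ x y, ((br.flip a) ^ m) x = 0 → ((br.flip a) ^ n) y = 0 →
      ((br.flip a) ^ k) (br x y) = 0 := by
    intro k
    induction k with
    | zero =>
      intro m n hmn x y hx hy
      obtain rfl : m = 0 := by omega
      have : x = 0 := hx
      simp [this]
    | succ k ih =>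
      intro m n hmn x y hx hy
      rcases m with _ | m
      · have : x = 0 := hx
        simp [this]
      rcases n with _ | n
      · have : y = 0 := hy
        simp [this]
      have hder : br.flip a (br x y) = br (br.flip a x) y + br x (br.flip a y) := by
        simp only [LinearMap.flip_apply]
        rw [hbr x y a]
        abel
      rw [pow_succ, Module.End.mul_apply, hder, map_add,
        ih m (n + 1) (by omega) _ _ (by rw [← hx, pow_succ]; rfl) hy,
        ih (m + 1) n (by omega) _ _ hx (by rw [← hy, pow_succ]; rfl), add_zero]
  exact ⟨m + n, key _ m n le_rfl x y hm hn⟩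

/-- `L` has a Cartan subalgebra of the form `L₀(R_a)`. The Lie algebra `G` plays the role of the
opposite of `L` modulo its Leibniz kernel, and `ρ` is the action of `G` on `L` by right
multiplications. -/
theorem exists_cartan {G : Type*} [Infinite F] [FiniteDimensional F L] [LieRing G] [LieAlgebra F G]
    [FiniteDimensional F G] {br : L →ₗ[F] L →ₗ[F] L} (hbr : IsLeibnizBracket br)
    (π : L →ₗ[F] G) (hπs : Function.Surjective π) (hπ : ∀ x y, π (br x y) = ⁅π y, π x⁆)
    (ρ : G →ₗ[F] Module.End F L) (hρ : ∀ a x, ρ (π a) x = br x a) :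
    ∃ a, IsCartanSubalg br (Module.End.maxGenEigenspace (br.flip a) 0) := by
  obtain ⟨g, hg⟩ := exists_engel_nilpotent' ρ (by
    intro g h v
    obtain ⟨a, rfl⟩ := hπs g
    obtain ⟨b, rfl⟩ := hπs h
    rw [← hπ, hρ, hρ, hρ, hρ, hρ, hbr])
  obtain ⟨a, rfl⟩ := hπs g
  have hρa : ρ (π a) = br.flip a := by ext x; exact hρ a x
  have hint : ∀ v, π (br.flip a v) = LieAlgebra.ad F G (π a) (π v) := fun v => hπ v a
  refine ⟨a, isSubalg_fittingNull hbr a, le_top, ?_, ?_⟩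
  · refine hg _ (by rw [hρa]; rfl) fun k => Submodule.span_mono ?_
    rintro _ ⟨x, hx, y, hy, rfl⟩
    refine ⟨x, hx, π y, ?_, (hρ y x).symm⟩
    rw [LieSubalgebra.mem_engel_iff]
    simp only [Module.End.mem_maxGenEigenspace, zero_smul, sub_zero] at hy
    obtain ⟨n, hn⟩ := hy
    refine ⟨n, ?_⟩
    have key : ∀ n v, π ((br.flip a ^ n) v) = (LieAlgebra.ad F G (π a) ^ n) (π v) := by
      intro n
      induction n with
      | zero => intro v; rfl
      | succ n ih =>
        intro v
        rw [pow_succ, pow_succ, Module.End.mul_apply, ih, hint]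
        rfl
    rw [← key, hn, map_zero]
  · intro x _ hx
    -- `a` itself need not lie in `L₀(R_a)`, but it does up to the kernel of `π`.
    obtain ⟨c, -, hc, hca⟩ := exists_mem_fittingNull π (br.flip a) (LieAlgebra.ad F G (π a))
      hint ⊤ (fun _ _ => trivial) (LieSubalgebra.self_mem_engel F (π a)) ⟨a, trivial, rfl⟩
    have h1 := (hx c hc).1
    rw [← hρ, hca, hρ] at h1
    simp only [Module.End.mem_maxGenEigenspace, zero_smul, sub_zero] at h1 ⊢
    obtain ⟨n, hn⟩ := h1
    exact ⟨n + 1, by rw [pow_succ]; exact hn⟩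

/-! ### Derived series -/

theorem brSpan_le_iff {br : L →ₗ[F] L →ₗ[F] L} {A B C : Submodule F L} :
    brSpan br A B ≤ C ↔ ∀ x ∈ A, ∀ y ∈ B, br x y ∈ C := by
  rw [brSpan, Submodule.span_le]
  constructor
  · intro h x hx y hy
    exact h ⟨x, hx, y, hy, rfl⟩
  · rintro h _ ⟨x, hx, y, hy, rfl⟩
    exact h x hx y hy

theorem br_mem_brSpan {br : L →ₗ[F] L →ₗ[F] L} {A B : Submodule F L} {x y : L} (hx : x ∈ A)
    (hy : y ∈ B) : br x y ∈ brSpan br A B :=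
  Submodule.subset_span ⟨x, hx, y, hy, rfl⟩

theorem brSpan_mono {br : L →ₗ[F] L →ₗ[F] L} {A B A' B' : Submodule F L} (hA : A ≤ A')
    (hB : B ≤ B') : brSpan br A B ≤ brSpan br A' B' :=
  brSpan_le_iff.2 fun _ hx _ hy => br_mem_brSpan (hA hx) (hB hy)

theorem derSeriesOf_le {br : L →ₗ[F] L →ₗ[F] L} {U : Submodule F L} (hU : IsSubalg br U) (k : ℕ) :
    derSeriesOf br U k ≤ U := by
  induction k with
  | zero => exact le_rfl
  | succ k ih => exact brSpan_le_iff.2 fun x hx y hy => hU x (ih hx) y (ih hy)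

theorem derSeriesOf_mono {br : L →ₗ[F] L →ₗ[F] L} {U V : Submodule F L} (h : U ≤ V) (k : ℕ) :
    derSeriesOf br U k ≤ derSeriesOf br V k := by
  induction k with
  | zero => exact h
  | succ k ih => exact brSpan_mono ih ih

theorem derSeriesOf_add {br : L →ₗ[F] L →ₗ[F] L} (U : Submodule F L) (k l : ℕ) :
    derSeriesOf br U (k + l) = derSeriesOf br (derSeriesOf br U k) l := by
  induction l with
  | zero => rfl
  | succ l ih => rw [← add_assoc, derSeriesOf, ih]; rfl

theorem isSolvableSub_of_isNilpotentSub {br : L →ₗ[F] L →ₗ[F] L} {U : Submodule F L}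
    (hU : IsSubalg br U) (h : IsNilpotentSub br U) : IsSolvableSub br U := by
  obtain ⟨n, hn⟩ := h
  refine ⟨n, eq_bot_iff.2 (hn ▸ ?_)⟩
  clear hn
  induction n with
  | zero => exact le_rfl
  | succ n ih => exact brSpan_mono ih (derSeriesOf_le hU n)

theorem derSeriesOf_invariant {br : L →ₗ[F] L →ₗ[F] L} (hbr : IsLeibnizBracket br) (a : L) (k : ℕ) :
    ∀ x ∈ derSeriesOf br ⊤ k, br x a ∈ derSeriesOf br ⊤ k := by
  induction k with
  | zero => intro x _; trivial
  | succ k ih =>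
    suffices h : derSeriesOf br ⊤ (k + 1) ≤ (derSeriesOf br ⊤ (k + 1)).comap (br.flip a) from
      fun x hx => h hx
    refine brSpan_le_iff.2 fun x hx y hy => ?_
    change br (br x y) a ∈ derSeriesOf br ⊤ (k + 1)
    rw [show br (br x y) a = br x (br y a) + br (br x a) y by rw [hbr x y a]; abel]
    exact add_mem (br_mem_brSpan hx (ih y hy)) (br_mem_brSpan (ih x hx) hy)

/-- If a solvable subalgebra `H` supplements the ideal `A` of `K`, then `K / A` is solvable. -/
theorem exists_derSeriesOf_le_ideal {br : L →ₗ[F] L →ₗ[F] L} {A K H : Submodule F L}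
    (hA : IsIdealOf br A K) (hAH : K ≤ H ⊔ A) (hK : IsSubalg br K) (hH : IsSolvableSub br H) :
    ∃ k, derSeriesOf br K k ≤ A := by
  obtain ⟨n, hn⟩ := hH
  have key : ∀ k, derSeriesOf br K k ≤ derSeriesOf br H k ⊔ A := by
    intro k
    induction k with
    | zero => exact hAH
    | succ k ih =>
      refine brSpan_le_iff.2 fun x hx y hy => ?_
      have hxK := derSeriesOf_le hK k hx
      have hyK := derSeriesOf_le hK k hy
      obtain ⟨u, hu, b, hb, rfl⟩ := Submodule.mem_sup.1 (ih hx)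
      obtain ⟨v, hv, c, hc, rfl⟩ := Submodule.mem_sup.1 (ih hy)
      have huK : u ∈ K := by simpa using sub_mem hxK (hA.1 hb)
      rw [show br (u + b) (v + c) = br u v + (br u c + br b (v + c)) by
        simp only [map_add, LinearMap.add_apply]; abel]
      exact add_mem (Submodule.mem_sup_left (br_mem_brSpan hu hv))
        (Submodule.mem_sup_right (add_mem (hA.2 c hc u huK).2 (hA.2 b hb _ hyK).1))
  exact ⟨n, by simpa [hn] using key n⟩

/-- A subideal supplemented by a solvable subalgebra contains a term of the derived series. -/
theorem exists_derSeriesOf_le_subideal {br : L →ₗ[F] L →ₗ[F] L} {C H : Submodule F L}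
    (hC : IsSubideal br C) (hHC : H ⊔ C = ⊤) (hH : IsSolvableSub br H) :
    ∃ k, derSeriesOf br ⊤ k ≤ C := by
  obtain ⟨n, ch, h0, hn, hch⟩ := hC
  have hle : ∀ i ≤ n, C ≤ ch i := by
    intro i
    induction i with
    | zero => intro _; exact h0.ge
    | succ i ih => intro hi; exact (ih (by omega)).trans (hch i (by omega)).1
  have hsub : ∀ i ≤ n, IsSubalg br (ch i) := by
    intro i hi
    rcases hi.eq_or_lt with rfl | hi
    · rw [hn]; exact fun _ _ _ _ => trivial
    · exact fun x hx y hy => ((hch i hi).2 x hx y ((hch i hi).1 hy)).1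
  have key : ∀ j ≤ n, ∃ k, derSeriesOf br ⊤ k ≤ ch (n - j) := by
    intro j
    induction j with
    | zero => intro _; exact ⟨0, by rw [Nat.sub_zero, hn]; exact le_top⟩
    | succ j ih =>
      intro hj
      obtain ⟨k, hk⟩ := ih (by omega)
      have hi := hch (n - (j + 1)) (by omega)
      rw [show n - (j + 1) + 1 = n - j by omega] at hi
      obtain ⟨l, hl⟩ := exists_derSeriesOf_le_ideal hi
        (le_top.trans (hHC.ge.trans (sup_le_sup_left (hle _ (by omega)) H)))
        (hsub _ (by omega)) hH
      exact ⟨k + l, by rw [derSeriesOf_add]; exact (derSeriesOf_mono hk l).trans hl⟩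
  obtain ⟨k, hk⟩ := key n le_rfl
  exact ⟨k, by rwa [Nat.sub_self, h0] at hk⟩

/-! ### Comparison with Lie algebras -/

section

variable {G : Type*} [LieRing G] [LieAlgebra F G] {br : L →ₗ[F] L →ₗ[F] L} {π : L →ₗ[F] G}

theorem derivedSeriesOfIdeal_le_map (hπ : ∀ x y, π (br x y) = ⁅π y, π x⁆) (J : LieIdeal F G)
    (U : Submodule F L) (hJ : J.toSubmodule ≤ U.map π) (k : ℕ) :
    (LieAlgebra.derivedSeriesOfIdeal F G k J).toSubmodule ≤ (derSeriesOf br U k).map π := by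
  induction k with
  | zero => exact hJ
  | succ k ih =>
    rw [LieAlgebra.derivedSeriesOfIdeal_succ, LieSubmodule.lieIdeal_oper_eq_linear_span',
      Submodule.span_le]
    rintro _ ⟨x, hx, y, hy, rfl⟩
    obtain ⟨u, hu, rfl⟩ := ih hx
    obtain ⟨v, hv, rfl⟩ := ih hy
    exact ⟨br v u, br_mem_brSpan hv hu, hπ v u⟩

theorem map_derSeriesOf_le (hπ : ∀ x y, π (br x y) = ⁅π y, π x⁆) (k : ℕ) :
    (derSeriesOf br ⊤ k).map π ≤ (LieAlgebra.derivedSeries F G k).toSubmodule := by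
  rw [Submodule.map_le_iff_le_comap]
  induction k with
  | zero => intro _ _; trivial
  | succ k ih =>
    refine brSpan_le_iff.2 fun x hx y hy => ?_
    rw [Submodule.mem_comap, hπ]
    rw [LieAlgebra.derivedSeries_def, LieAlgebra.derivedSeriesOfIdeal_succ]
    exact LieSubmodule.lie_mem_lie (ih hy) (ih hx)

end

theorem hasTrivialRadical_quotient_radical (G : Type*) [LieRing G] [LieAlgebra F G]
    [FiniteDimensional F G] :
    LieAlgebra.HasTrivialRadical F (G ⧸ LieAlgebra.radical F G) := by
  set r := LieAlgebra.radical F G with hr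
  refine LieAlgebra.hasTrivialRadical_of_no_solvable_ideals fun J hJ => ?_
  let q : G →ₗ[F] G ⧸ r := (LieSubmodule.Quotient.mk' r : G →ₗ[F] G ⧸ r)
  have hq : ∀ x y, q ⁅x, y⁆ = ⁅q x, q y⁆ := fun x y => rfl
  let J' : LieIdeal F G :=
    { J.toSubmodule.comap q with
      lie_mem := fun {x m} hm => by
        change q ⁅x, m⁆ ∈ J
        rw [hq]
        exact J.lie_mem hm }
  have hle : ∀ k, (LieAlgebra.derivedSeriesOfIdeal F G k J').toSubmodule ≤
      (LieAlgebra.derivedSeriesOfIdeal F (G ⧸ r) k J).toSubmodule.comap q := by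
    intro k
    induction k with
    | zero => exact le_rfl
    | succ k ih =>
      rw [LieAlgebra.derivedSeriesOfIdeal_succ, LieSubmodule.lieIdeal_oper_eq_linear_span',
        Submodule.span_le]
      rintro _ ⟨x, hx, y, hy, rfl⟩
      change q ⁅x, y⁆ ∈ LieAlgebra.derivedSeriesOfIdeal F (G ⧸ r) (k + 1) J
      rw [hq, LieAlgebra.derivedSeriesOfIdeal_succ]
      exact LieSubmodule.lie_mem_lie (ih hx) (ih hy)
  obtain ⟨k, hk⟩ := (LieAlgebra.isSolvable_iff F J).1 hJ
  obtain ⟨l, hl⟩ := (LieAlgebra.isSolvable_iff F r).1 inferInstance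
  rw [LieIdeal.derivedSeries_eq_bot_iff] at hk hl
  have hJ' : LieAlgebra.IsSolvable J' := by
    refine (LieAlgebra.isSolvable_iff F J').2 ⟨l + k, ?_⟩
    rw [LieIdeal.derivedSeries_eq_bot_iff, LieAlgebra.derivedSeriesOfIdeal_add, eq_bot_iff, ← hl]
    refine LieAlgebra.derivedSeriesOfIdeal_mono (fun x hx => ?_) l
    have hx' := hle k hx
    rw [hk] at hx'
    have hx0 : q x = 0 := by simpa using hx'
    exact (LieSubmodule.Quotient.mk_eq_zero r).1 hx0
  have hJr : J' ≤ r := (LieAlgebra.LieIdeal.solvable_iff_le_radical F G J').1 hJ'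
  rw [eq_bot_iff]
  intro z hz
  obtain ⟨x, rfl⟩ := LieSubmodule.Quotient.surjective_mk' r z
  have : x ∈ r := hJr hz
  simpa using (LieSubmodule.Quotient.mk_eq_zero r).2 this

/-- The ideal complementary to the derived algebra is abelian, hence zero. -/
theorem derivedSeries_eq_top_of_hasTrivialRadical [CharZero F] (S : Type*) [LieRing S]
    [LieAlgebra F S] [FiniteDimensional F S] [LieAlgebra.HasTrivialRadical F S] (k : ℕ) :
    LieAlgebra.derivedSeries F S k = ⊤ := by
  apply LieIdeal.derivedSeries_eq_top
  set A := LieAlgebra.derivedSeries F S 1 with hA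
  have hc := A.isCompl_killingCompl
  have : IsLieAbelian A.killingCompl := by
    rw [LieSubmodule.lie_abelian_iff_lie_self_eq_bot, eq_bot_iff, ← hc.inf_eq_bot]
    exact le_inf (LieSubmodule.mono_lie le_top le_top) (LieSubmodule.lie_le_right _ _)
  have h0 := LieAlgebra.IsKilling.ideal_eq_bot_of_isLieAbelian A.killingCompl
  simpa [h0] using hc.sup_eq_top

/-- A quotient Lie algebra (up to order) of `L` through which the right
multiplications factor is solvable. -/
theorem isSolvable_of_cartan_weakCIdeal {G : Type*} [CharZero F] [FiniteDimensional F L]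
    [LieRing G] [LieAlgebra F G] [FiniteDimensional F G] {br : L →ₗ[F] L →ₗ[F] L}
    (hbr : IsLeibnizBracket br)
    (h : ∀ C : Submodule F L, IsCartanSubalg br C → IsWeakCIdeal br C)
    (π : L →ₗ[F] G) (hπs : Function.Surjective π) (hπ : ∀ x y, π (br x y) = ⁅π y, π x⁆)
    (ρ : G →ₗ[F] Module.End F L) (hρ : ∀ a x, ρ (π a) x = br x a) :
    LieAlgebra.IsSolvable G := by
  have : Infinite F := CharZero.infinite F
  obtain ⟨a, ha⟩ := exists_cartan hbr π hπs hπ ρ hρ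
  set H := Module.End.maxGenEigenspace (br.flip a) 0 with hH
  obtain ⟨-, -, C, hC, hHC, hHC'⟩ := h H ha
  have hHsolv := isSolvableSub_of_isNilpotentSub ha.1 ha.2.2.1
  obtain ⟨k, hk⟩ := exists_derSeriesOf_le_subideal hC hHC hHsolv
  set N := leibCore br H with hN
  have hNH : N ≤ H := sSup_le fun A hA => hA.2
  have hNi : IsLeibIdeal br N := leibCore_isIdeal br H
  set r := LieAlgebra.radical F G with hr
  let S := G ⧸ r
  let σ : L →ₗ[F] S := (LieSubmodule.Quotient.mk' r : G →ₗ[F] S) ∘ₗ π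
  have hσs : Function.Surjective σ := (LieSubmodule.Quotient.surjective_mk' r).comp hπs
  have hσ : ∀ x y, σ (br x y) = ⁅σ y, σ x⁆ := fun x y => by
    change LieSubmodule.Quotient.mk' r (π (br x y)) = _
    rw [hπ]
    rfl
  have : LieAlgebra.HasTrivialRadical F S := hasTrivialRadical_quotient_radical G
  -- The image of the core of `H` in the semisimple algebra `S` is a solvable ideal.
  let J : LieIdeal F S :=
    { N.map σ with
      lie_mem := by
        rintro x _ ⟨n, hn, rfl⟩
        obtain ⟨y, rfl⟩ := hσs x
        exact ⟨br n y, (hNi.2 n hn y trivial).1, hσ n y⟩ }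
  have hJ : J = ⊥ := by
    have : LieAlgebra.IsSolvable J := by
      obtain ⟨l, hl⟩ := hHsolv
      refine (LieAlgebra.isSolvable_iff F J).2 ⟨l, ?_⟩
      rw [LieIdeal.derivedSeries_eq_bot_iff, ← LieSubmodule.toSubmodule_eq_bot, eq_bot_iff]
      have := derivedSeriesOfIdeal_le_map hσ J H (Submodule.map_mono hNH) l
      rwa [hl, Submodule.map_bot] at this
    exact LieAlgebra.HasTrivialRadical.eq_bot_of_isSolvable J
  -- `S` is perfect, so `C` maps onto `S`, and the null component of `σ a` comes from `H ⊓ C`.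
  have hnull : ∀ s ∈ LieSubalgebra.engel F (σ a), s = 0 := by
    intro s hs
    have hsD : s ∈ (derSeriesOf br ⊤ k).map σ := by
      have h1 := derivedSeriesOfIdeal_le_map hσ ⊤ ⊤
        (by rw [Submodule.map_top, LinearMap.range_eq_top.2 hσs]; exact le_top) k
      rw [← LieAlgebra.derivedSeries_def, derivedSeries_eq_top_of_hasTrivialRadical] at h1
      exact h1 trivial
    obtain ⟨p, hp, hpH, rfl⟩ := exists_mem_fittingNull σ (br.flip a) (LieAlgebra.ad F S (σ a))
      (fun v => hσ v a) (derSeriesOf br ⊤ k) (derSeriesOf_invariant hbr a k) hs hsD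
    have : σ p ∈ J := ⟨p, hHC' ⟨hpH, hk hp⟩, rfl⟩
    rwa [hJ, LieSubmodule.mem_bot] at this
  have ha0 : σ a = 0 := hnull _ (LieSubalgebra.self_mem_engel F _)
  rw [ha0, LieSubalgebra.engel_zero] at hnull
  have htop : (⊤ : LieIdeal F G) ≤ r := fun x _ =>
    (LieSubmodule.Quotient.mk_eq_zero r).1 (hnull (LieSubmodule.Quotient.mk' r x) trivial)
  have : LieAlgebra.IsSolvable (⊤ : LieIdeal F G) :=
    (LieAlgebra.LieIdeal.solvable_iff_le_radical F G ⊤).2 htop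
  obtain ⟨l, hl⟩ := (LieAlgebra.isSolvable_iff F (⊤ : LieIdeal F G)).1 this
  rw [LieIdeal.derivedSeries_eq_bot_iff] at hl
  exact (LieAlgebra.isSolvable_iff F G).2 ⟨l, hl⟩

/-! ### The Leibniz kernel -/

theorem br_leibnizKernel {br : L →ₗ[F] L →ₗ[F] L} (hbr : IsLeibnizBracket br) (x : L) {i : L}
    (hi : i ∈ leibnizKernel br) : br x i = 0 := by
  suffices h : leibnizKernel br ≤ LinearMap.ker (br x) from h hi
  refine Submodule.span_le.2 ?_
  rintro _ ⟨y, rfl⟩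
  exact (hbr x y y).trans (sub_self _)

theorem br_add_br_mem {br : L →ₗ[F] L →ₗ[F] L} (x y : L) :
    br x y + br y x ∈ leibnizKernel br := by
  have hsq : ∀ z, br z z ∈ leibnizKernel br := fun z => Submodule.subset_span ⟨z, rfl⟩
  have h1 := sub_mem (sub_mem (hsq (x + y)) (hsq x)) (hsq y)
  simp only [map_add, LinearMap.add_apply] at h1
  convert h1 using 1
  abel

theorem isLeibIdeal_leibnizKernel {br : L →ₗ[F] L →ₗ[F] L} (hbr : IsLeibnizBracket br) :
    IsLeibIdeal br (leibnizKernel br) := by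
  refine ⟨le_top, fun i hi y _ => ?_⟩
  have h0 : br y i = 0 := br_leibnizKernel hbr y hi
  refine ⟨?_, by rw [h0]; exact zero_mem _⟩
  have h1 := br_add_br_mem (br := br) i y
  rwa [h0, add_zero] at h1

/-- The Lie ring structure on `L` modulo its Leibniz kernel, with the order of the factors reversed
so that right multiplications of `L` become adjoint maps. -/
@[reducible] def quotLieRing {br : L →ₗ[F] L →ₗ[F] L} (hbr : IsLeibnizBracket br) :
    LieRing (L ⧸ leibnizKernel br) where
  bracket x y := quotBr br (leibnizKernel br) (isLeibIdeal_leibnizKernel hbr) y x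
  add_lie _ _ _ := map_add _ _ _
  lie_add _ _ _ := by
    rw [map_add]
    rfl
  lie_self x := by
    obtain ⟨x, rfl⟩ := Submodule.mkQ_surjective _ x
    exact (Submodule.Quotient.mk_eq_zero _).2 (Submodule.subset_span ⟨x, rfl⟩)
  leibniz_lie x y z := by
    obtain ⟨x, rfl⟩ := Submodule.mkQ_surjective _ x
    obtain ⟨y, rfl⟩ := Submodule.mkQ_surjective _ y
    obtain ⟨z, rfl⟩ := Submodule.mkQ_surjective _ z
    change Submodule.Quotient.mk (br (br z y) x) =
      Submodule.Quotient.mk (br z (br y x)) + Submodule.Quotient.mk (br (br z x) y)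
    rw [← Submodule.Quotient.mk_add, hbr z y x, sub_add_cancel]

/-- over a field of characteristic zero, if every Cartan
subalgebra of `L` is a weak c-ideal, then `L` is solvable. -/
theorem solvable_of_cartan_weakCIdeal [CharZero F]
    (br : L →ₗ[F] L →ₗ[F] L) (hbr : IsLeibnizBracket br)
    [FiniteDimensional F L]
    (h : ∀ C : Submodule F L, IsCartanSubalg br C → IsWeakCIdeal br C) :
    IsSolvableSub br ⊤ := by
  let G := L ⧸ leibnizKernel br
  let _ : LieRing G := quotLieRing hbr
  let _ : LieAlgebra F G :=
    { lie_smul := fun t x y => by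
        change quotBr _ _ _ (t • y) x = t • quotBr _ _ _ y x
        rw [map_smul]
        rfl }
  let π : L →ₗ[F] G := (leibnizKernel br).mkQ
  have hπ : ∀ x y, π (br x y) = ⁅π y, π x⁆ := fun _ _ => rfl
  let ρ : G →ₗ[F] Module.End F L := (leibnizKernel br).liftQ br.flip fun i hi => by
    ext x
    exact br_leibnizKernel hbr x hi
  have hG : LieAlgebra.IsSolvable G := isSolvable_of_cartan_weakCIdeal hbr h π
    (Submodule.mkQ_surjective _) hπ ρ fun _ _ => rfl
  obtain ⟨k, hk⟩ := (LieAlgebra.isSolvable_iff F G).1 hG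
  -- The `k`-th term lies in the Leibniz kernel, which has zero bracket.
  refine ⟨k + 1, eq_bot_iff.2 (brSpan_le_iff.2 fun x _ y hy => ?_)⟩
  have hy' : π y ∈ LieAlgebra.derivedSeries F G k := map_derSeriesOf_le hπ k ⟨y, hy, rfl⟩
  rw [hk, LieSubmodule.mem_bot] at hy'
  exact br_leibnizKernel hbr x ((Submodule.Quotient.mk_eq_zero _).1 hy')
end

section
/- Let L be a finite-dimensional solvable symmetric Leibniz algebra over any field in which every maximal subalgebra of each maximal nilpotent subalgebra of L is a weak c-ideal of L. Then L is supersolvable. -/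
/-!
In a symmetric Leibniz algebra all squares are central, so the Leibniz kernel `I` is a central ideal
and `L/I` is a Lie algebra. Maximal nilpotent subalgebras and their maximal subalgebras pull back
along `L → L/I`, and weak c-ideals push forward, so `L/I` inherits the hypothesis. A chain of ideals
is then built upwards from `0`: a proper ideal `J` not containing `I` is enlarged by a central
element, and otherwise a one-dimensional ideal of the Lie algebra `L/J` is used. What remains is to
show that every nonzero quotient of a solvable Lie algebra satisfying the hypothesis has a
one-dimensional ideal (`lie_main`).

Let `P` be a maximal nilpotent ideal and `N ⊇ P` a maximal nilpotent subalgebra. Each subspace `D`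
of codimension one in `N` with `D ⊇ [N, N]` is a maximal subalgebra of `N`, hence a weak c-ideal:
`L = D + C` with `C` a subideal and `D ∩ C` in the core `D_L`. The nilpotent residual `R` of the
subideal `C` is an ideal of `L` (`residual`), `P ∩ R` has dimension at most one modulo `D_L`, and
modulo `R` both `C` and `D` act nilpotently on `P`. So all chief factors of `L` between `P ∩ D_L`
and `P` are one-dimensional (`se_core`). Intersecting over `D` yields an ideal `B ≤ P` contained in
every `D`, with one-dimensional chief factors in `P/B` (`exists_B`).

Let `X` be the common annihilator of these factors: an ideal containing `[L, L]` and `N` and acting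
nilpotently on `P/B` (`exists_X`). A Fitting decomposition argument shows that `X ≤ P` (`X_le_P`,
resting on `no_split`), whence `N = P = X`. Consequently `L/P` is abelian and `B`, which lies in
every `D`, is contained in `[P, P]`. Thus the chief factors in `P/[P, P]` are one-dimensional, and bracketing
eigenvectors transports this down the lower central series of `P` (`se_lcs`), so all chief factors
of `L` are one-dimensional.
-/

open Submodule

variable {F : Type*} [Field F] {L : Type*} [AddCommGroup L] [Module F L]

namespace WeakC

/-! ### Lie brackets, ideals and iterated brackets -/

/-- `br` is a Lie bracket: alternating, and satisfying the (left) Jacobi identity. -/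
structure LieB (br : L →ₗ[F] L →ₗ[F] L) : Prop where
  self : ∀ x, br x x = 0
  jac : ∀ x y z, br x (br y z) = br (br x y) z + br y (br x z)

theorem LieB.skew {br : L →ₗ[F] L →ₗ[F] L} (hL : LieB br) (x y : L) : br x y = -br y x := by
  have h := hL.self (x + y)
  simp only [map_add, LinearMap.add_apply, hL.self, zero_add, add_zero] at h
  exact eq_neg_of_add_eq_zero_right h

theorem LieB.jac' {br : L →ₗ[F] L →ₗ[F] L} (hL : LieB br) (x y z : L) :
    br (br x y) z = br x (br y z) - br y (br x z) := by
  rw [hL.jac x y z]; abel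

/-- `J` is an ideal of the Lie algebra. Only stability under left brackets is recorded; stability
under right brackets follows from skew-symmetry. -/
def Id (br : L →ₗ[F] L →ₗ[F] L) (J : Submodule F L) : Prop :=
  ∀ x, ∀ y ∈ J, br x y ∈ J

theorem Id.right {br : L →ₗ[F] L →ₗ[F] L} (hL : LieB br) {J : Submodule F L} (hJ : Id br J)
    {y : L} (hy : y ∈ J) (x : L) : br y x ∈ J := by
  rw [hL.skew]; exact neg_mem (hJ x y hy)

theorem Id.isLeibIdeal {br : L →ₗ[F] L →ₗ[F] L} (hL : LieB br) {J : Submodule F L}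
    (hJ : Id br J) : IsLeibIdeal br J :=
  ⟨le_top, fun x hx y _ => ⟨hJ.right hL hx y, hJ y x hx⟩⟩

theorem id_of_isLeibIdeal {br : L →ₗ[F] L →ₗ[F] L} {J : Submodule F L}
    (hJ : IsLeibIdeal br J) : Id br J := fun x y hy => (hJ.2 y hy x trivial).2

theorem Id.inf {br : L →ₗ[F] L →ₗ[F] L} {A B : Submodule F L} (hA : Id br A) (hB : Id br B) :
    Id br (A ⊓ B) := fun x y hy => ⟨hA x y hy.1, hB x y hy.2⟩

theorem Id.sup {br : L →ₗ[F] L →ₗ[F] L} {A B : Submodule F L} (hA : Id br A) (hB : Id br B) :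
    Id br (A ⊔ B) := by
  intro x y hy
  obtain ⟨a, ha, b, hb, rfl⟩ := Submodule.mem_sup.1 hy
  rw [map_add]
  exact add_mem (Submodule.mem_sup_left (hA x a ha)) (Submodule.mem_sup_right (hB x b hb))

theorem id_top (br : L →ₗ[F] L →ₗ[F] L) : Id br ⊤ := fun _ _ _ => trivial

theorem id_bot (br : L →ₗ[F] L →ₗ[F] L) : Id br ⊥ := by
  intro x y hy
  rw [(Submodule.mem_bot F).1 hy, map_zero]; exact zero_mem _

theorem brSpan_le {br : L →ₗ[F] L →ₗ[F] L} {A B K : Submodule F L} :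
    brSpan br A B ≤ K ↔ ∀ x ∈ A, ∀ y ∈ B, br x y ∈ K := by
  unfold brSpan
  rw [Submodule.span_le]
  constructor
  · intro h x hx y hy
    exact h ⟨x, hx, y, hy, rfl⟩
  · rintro h z ⟨x, hx, y, hy, rfl⟩
    exact h x hx y hy

theorem mem_brSpan (br : L →ₗ[F] L →ₗ[F] L) {A B : Submodule F L} {x y : L} (hx : x ∈ A)
    (hy : y ∈ B) : br x y ∈ brSpan br A B :=
  Submodule.subset_span ⟨x, hx, y, hy, rfl⟩

theorem brSpan_mono (br : L →ₗ[F] L →ₗ[F] L) {A B A' B' : Submodule F L} (h : A ≤ A')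
    (h' : B ≤ B') : brSpan br A B ≤ brSpan br A' B' :=
  brSpan_le.2 fun _ hx _ hy => mem_brSpan br (h hx) (h' hy)

theorem brSpan_comm {br : L →ₗ[F] L →ₗ[F] L} (hL : LieB br) (A B : Submodule F L) :
    brSpan br A B = brSpan br B A := by
  apply le_antisymm <;> refine brSpan_le.2 fun x hx y hy => ?_ <;> rw [hL.skew] <;>
    exact neg_mem (mem_brSpan br hy hx)

/-- The transporter `{v | [E, v] ⊆ J}`, that is, the preimage of the centralizer of `E` in `L/J`. -/
def cen (br : L →ₗ[F] L →ₗ[F] L) (E J : Submodule F L) : Submodule F L where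
  carrier := {v | ∀ e ∈ E, br e v ∈ J}
  zero_mem' := by intro e _; rw [map_zero]; exact zero_mem _
  add_mem' := by intro a b ha hb e he; rw [map_add]; exact add_mem (ha e he) (hb e he)
  smul_mem' := by intro c a ha e he; rw [map_smul]; exact J.smul_mem c (ha e he)

theorem mem_cen {br : L →ₗ[F] L →ₗ[F] L} {E J : Submodule F L} {v : L} :
    v ∈ cen br E J ↔ ∀ e ∈ E, br e v ∈ J := Iff.rfl

theorem Id.cen {br : L →ₗ[F] L →ₗ[F] L} (hL : LieB br) {E J : Submodule F L} (hE : Id br E)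
    (hJ : Id br J) : Id br (cen br E J) := by
  intro x v hv e he
  rw [hL.jac]
  exact add_mem (hv _ (hE.right hL he x)) (hJ _ _ (hv e he))

theorem Id.brSpan {br : L →ₗ[F] L →ₗ[F] L} (hL : LieB br) {A B : Submodule F L} (hA : Id br A)
    (hB : Id br B) : Id br (brSpan br A B) := by
  intro x y hy
  have : _root_.brSpan br A B ≤ (_root_.brSpan br A B).comap (br x) := by
    refine brSpan_le.2 fun a ha b hb => ?_
    rw [Submodule.mem_comap, hL.jac]
    exact add_mem (mem_brSpan br (hA x a ha) hb) (mem_brSpan br ha (hB x b hb))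
  exact this hy

/-- `[E, [E, …, [E, V]…]]` with `n` brackets. For `V = E` this is the lower central series of `E`
with its indices starting at `0`. -/
def it (br : L →ₗ[F] L →ₗ[F] L) (E V : Submodule F L) : ℕ → Submodule F L
  | 0 => V
  | n + 1 => brSpan br E (it br E V n)

theorem it_succ' (br : L →ₗ[F] L →ₗ[F] L) (E V : Submodule F L) (n : ℕ) :
    it br E V (n + 1) = it br E (brSpan br E V) n := by
  induction n with
  | zero => rfl
  | succ n ih => rw [it, ih]; rfl

theorem it_add (br : L →ₗ[F] L →ₗ[F] L) (E V : Submodule F L) (m n : ℕ) :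
    it br E V (n + m) = it br E (it br E V n) m := by
  induction m with
  | zero => rfl
  | succ m ih => rw [← add_assoc, it, ih]; rfl

theorem it_mono (br : L →ₗ[F] L →ₗ[F] L) {E V E' V' : Submodule F L} (h : E ≤ E') (h' : V ≤ V')
    (n : ℕ) : it br E V n ≤ it br E' V' n := by
  induction n with
  | zero => exact h'
  | succ n ih => exact brSpan_mono br h ih

theorem it_le (br : L →ₗ[F] L →ₗ[F] L) {E V : Submodule F L} (h : brSpan br E V ≤ V)
    (n : ℕ) : it br E V n ≤ V := by
  induction n with
  | zero => exact le_rfl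
  | succ n ih => exact (brSpan_mono br le_rfl ih).trans h

theorem it_anti (br : L →ₗ[F] L →ₗ[F] L) {E V : Submodule F L} (h : brSpan br E V ≤ V) :
    Antitone (it br E V) := by
  refine antitone_nat_of_succ_le fun n => ?_
  rw [it_succ']
  exact it_mono br le_rfl h n

theorem Id.it {br : L →ₗ[F] L →ₗ[F] L} (hL : LieB br) {A B : Submodule F L} (hA : Id br A)
    (hB : Id br B) (n : ℕ) : Id br (it br A B n) := by
  induction n with
  | zero => exact hB
  | succ n ih => exact hA.brSpan hL ih

theorem lcsOf_eq {br : L →ₗ[F] L →ₗ[F] L} (hL : LieB br) (U : Submodule F L) (n : ℕ) :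
    lcsOf br U n = it br U U n := by
  induction n with
  | zero => rfl
  | succ n ih => rw [lcsOf, ih, brSpan_comm hL]; rfl

theorem exists_max [FiniteDimensional F L] (S : Submodule F L → Prop) (h : ∃ K, S K) :
    ∃ K, S K ∧ ∀ K', S K' → K ≤ K' → K' = K := by
  obtain ⟨K, hK, hm⟩ := (wellFounded_gt (α := Submodule F L)).has_min {K | S K} h
  exact ⟨K, hK, fun K' h' hle => by
    by_contra hne
    exact hm K' h' (lt_of_le_of_ne hle (Ne.symm hne))⟩

theorem exists_min [FiniteDimensional F L] (S : Submodule F L → Prop) (h : ∃ K, S K) :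
    ∃ K, S K ∧ ∀ K', S K' → K' ≤ K → K' = K := by
  obtain ⟨K, hK, hm⟩ := (wellFounded_lt (α := Submodule F L)).has_min {K | S K} h
  exact ⟨K, hK, fun K' h' hle => by
    by_contra hne
    exact hm K' h' (lt_of_le_of_ne hle hne)⟩

theorem stab [FiniteDimensional F L] {f : ℕ → Submodule F L} (hf : Antitone f) :
    ∃ n, ∀ m, n ≤ m → f m = f n := by
  obtain ⟨n, hn⟩ := IsArtinian.monotone_stabilizes
    (⟨fun i => OrderDual.toDual (f i), fun a b h => hf h⟩ : ℕ →o (Submodule F L)ᵒᵈ)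
  exact ⟨n, fun m hm => (hn m hm).symm⟩

/-- Engel-type step: if `E` acts nilpotently on `V` modulo `J`, and `V` is not contained in `J`, then
`E` annihilates a nonzero element of `V` modulo `J`. -/
theorem nilFix {br : L →ₗ[F] L →ₗ[F] L} {E V J : Submodule F L} (hEV : ∀ e ∈ E, ∀ v ∈ V, br e v ∈ V)
    {k : ℕ} (hk : it br E V k ≤ J) (hV : ¬ V ≤ J) : ∃ v ∈ V, v ∉ J ∧ ∀ e ∈ E, br e v ∈ J := by
  induction k with
  | zero => exact absurd hk hV
  | succ k ih =>
    by_cases h : it br E V k ≤ J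
    · exact ih h
    · obtain ⟨v, hv, hvJ⟩ := SetLike.not_le_iff_exists.1 h
      exact ⟨v, it_le br (brSpan_le.2 hEV) k hv, hvJ, fun e he => hk (mem_brSpan br he hv)⟩

/-- If `V = [E, V]` modulo `Z`, then `V` equals every iterate `[E, [E, …, V]]` modulo `Z`. -/
theorem nilPerf {br : L →ₗ[F] L →ₗ[F] L} {E V Z : Submodule F L}
    (hZ : ∀ e ∈ E, ∀ v ∈ Z, br e v ∈ Z) (h : V ≤ brSpan br E V ⊔ Z) (k : ℕ) :
    V ≤ it br E V k ⊔ Z := by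
  induction k with
  | zero => exact le_sup_left
  | succ k ih =>
    refine h.trans (sup_le ?_ le_sup_right)
    refine brSpan_le.2 fun e he v hv => ?_
    obtain ⟨a, ha, z, hz, rfl⟩ := Submodule.mem_sup.1 (ih hv)
    rw [map_add]
    exact add_mem (Submodule.mem_sup_left (mem_brSpan br he ha))
      (Submodule.mem_sup_right (hZ e he z hz))

/-! ### Supersolvable embedding and weak c-ideals -/

/-- Supersolvable embedding of `P/B`: for every ideal `J ≥ B` not containing `P`, some element of
`P` spans a one-dimensional ideal of `L/J`. For ideals `B ≤ P` this says that all chief factors of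
`L` between `B` and `P` have dimension one. -/
def SE (br : L →ₗ[F] L →ₗ[F] L) (P B : Submodule F L) : Prop :=
  ∀ J, Id br J → B ≤ J → ¬ P ≤ J → ∃ v ∈ P, v ∉ J ∧ ∀ x, ∃ c : F, br x v - c • v ∈ J

/-- The standard inclusion `[C^(m+1), V] ⊆ [C, [C, …, [C, V]]]` with `m + 1` brackets on the right. -/
theorem it_bracket {br : L →ₗ[F] L →ₗ[F] L} (hL : LieB br) (C : Submodule F L) (m : ℕ) :
    ∀ V : Submodule F L, ∀ x ∈ it br C C m, ∀ y ∈ V, br x y ∈ it br C V (m + 1) := by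
  induction m with
  | zero => intro V x hx y hy; exact mem_brSpan br hx hy
  | succ m ih =>
    intro V x hx y hy
    have : it br C C (m + 1) ≤ (it br C V (m + 2)).comap (br.flip y) := by
      refine brSpan_le.2 fun c hc x' hx' => ?_
      rw [Submodule.mem_comap, LinearMap.flip_apply, hL.jac']
      refine sub_mem (mem_brSpan br hc (ih V x' hx' y hy)) ?_
      rw [it_succ']
      exact ih _ x' hx' _ (mem_brSpan br hc hy)
    exact this hx

/-- If `C = ch 0` is a subideal of `ch n` by a chain of length `n`, then `n` brackets with `C` carry
`ch n` into `C`. -/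
theorem subideal_it {br : L →ₗ[F] L →ₗ[F] L} {ch : ℕ → Submodule F L} :
    ∀ n : ℕ, (∀ i < n, IsIdealOf br (ch i) (ch (i + 1))) →
      ch 0 ≤ ch n ∧ it br (ch 0) (ch n) n ≤ ch 0 := by
  intro n
  induction n with
  | zero => intro _; exact ⟨le_rfl, le_rfl⟩
  | succ n ih =>
    intro h
    obtain ⟨h1, h2⟩ := ih fun i hi => h i (by omega)
    have h3 := h n (by omega)
    refine ⟨h1.trans h3.1, ?_⟩
    rw [it_succ']
    refine (it_mono br le_rfl ?_ n).trans h2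
    exact brSpan_le.2 fun x hx y hy => (h3.2 x (h1 hx) y hy).1

/-- The nilpotent residual `R` of a subideal `C` is an ideal of the whole of `L`: since `C` is a
subideal, `R` is also the stable term of `[C, [C, …, L]]`, and `[R, L]` lies in that term.
Moreover `C` acts nilpotently on `L/R`. -/
theorem residual [FiniteDimensional F L] {br : L →ₗ[F] L →ₗ[F] L} (hL : LieB br)
    {C : Submodule F L} (hC : IsSubideal br C) :
    ∃ (R : Submodule F L) (k : ℕ), Id br R ∧ R ≤ C ∧ it br C ⊤ k ≤ R := by
  obtain ⟨n, ch, rfl, hn, hch⟩ := hC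
  have h2 := (subideal_it n hch).2
  rw [hn] at h2
  obtain ⟨m, hm⟩ := stab (it_anti br (E := ch 0) (V := ⊤) le_top)
  have hle : it br (ch 0) ⊤ (n + m) ≤ it br (ch 0) (ch 0) m := by
    rw [it_add]; exact it_mono br le_rfl h2 m
  have heq : it br (ch 0) ⊤ m = it br (ch 0) (ch 0) m := by
    apply le_antisymm
    · rw [← hm (n + m) (by omega)]; exact hle
    · exact it_mono br le_rfl le_top m
  refine ⟨it br (ch 0) ⊤ m, m, ?_, ?_, le_rfl⟩
  · intro x y hy
    rw [heq] at hy
    rw [← hm (m + 1) (by omega), hL.skew]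
    exact neg_mem (it_bracket hL _ m ⊤ y hy x trivial)
  · rw [← hm (n + m) (by omega), it_add]
    refine (it_mono br le_rfl h2 m).trans (it_le br ?_ m)
    have : ∀ n : ℕ, (∀ i < n, IsIdealOf br (ch i) (ch (i + 1))) → ch n = ⊤ →
        ∀ x ∈ ch 0, ∀ y ∈ ch 0, br x y ∈ ch 0 := by
      intro n hch hn x hx y hy
      cases n with
      | zero => rw [hn]; trivial
      | succ n =>
        have h0 := hch 0 (by omega)
        exact (h0.2 x hx y (h0.1 hy)).1
    exact brSpan_le.2 (this n hch hn)

theorem leibCore_le (br : L →ₗ[F] L →ₗ[F] L) (D : Submodule F L) : leibCore br D ≤ D :=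
  sSup_le fun _ hA => hA.2

/-- A weak c-ideal `D` of codimension one in `N` contributes a supersolvably embedded section of `P`.
Write `L = D + C` with `D ∩ C` in the core `D_L`, and let `R` be the nilpotent residual of `C`. If
`P ∩ R` is not contained in `J`, then `P ∩ R` is one-dimensional modulo `J`, because
`R ∩ D ≤ D_L`. Otherwise `C` and `D` both act nilpotently on `P/J`, and a common fixed vector is
found by climbing the chain of subideals from `C` to `L`. -/
theorem se_core [FiniteDimensional F L] {br : L →ₗ[F] L →ₗ[F] L} (hL : LieB br)
    {P N D : Submodule F L} (hP : Id br P) (hPN : P ≤ N) {k : ℕ} (hN : it br N N k = ⊥)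
    (hDN : D ≤ N) (hD : ∀ v ∈ N, v ∉ D → ∀ w ∈ N, ∃ c : F, w - c • v ∈ D)
    (hw : IsWeakCIdeal br D) : SE br P (P ⊓ leibCore br D) := by
  obtain ⟨-, -, C, hC, hDC, hcap⟩ := hw
  obtain ⟨R, r, hR, hRC, hr⟩ := residual hL hC
  intro J hJ hBJ hPJ
  by_cases hPR : P ⊓ R ≤ J
  · -- here both `C` and `D` act nilpotently on `P/J`
    obtain ⟨n, ch, h0, hn, hch⟩ := hC
    have key : ∀ i, i ≤ n → C ≤ ch i ∧ ∀ V : Submodule F L, V ≤ P → ¬ V ≤ J →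
        (∀ e ∈ ch i, ∀ v ∈ V, br e v ∈ V) → ∃ v ∈ V, v ∉ J ∧ ∀ e ∈ ch i, br e v ∈ J := by
      intro i
      induction i with
      | zero =>
        intro _
        rw [h0]
        refine ⟨le_rfl, fun V hVP hVJ hst => nilFix hst (k := r) ?_ hVJ⟩
        refine le_trans (le_inf ?_ ?_) hPR
        · exact (it_le br (brSpan_le.2 hst) r).trans hVP
        · exact (it_mono br le_rfl le_top r).trans hr
      | succ i ih =>
        intro hi
        obtain ⟨hCi, ih⟩ := ih (by omega)
        have hid := hch i (by omega)
        refine ⟨hCi.trans hid.1, fun V hVP hVJ hst => ?_⟩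
        obtain ⟨v₀, hv₀, hv₀J, hv₀'⟩ := ih V hVP hVJ fun e he => hst e (hid.1 he)
        have hst' : ∀ e ∈ D ⊓ ch (i + 1), ∀ v ∈ V ⊓ cen br (ch i) J,
            br e v ∈ V ⊓ cen br (ch i) J := by
          intro e he v hv
          refine ⟨hst e he.2 v hv.1, fun a ha => ?_⟩
          rw [hL.jac]
          exact add_mem (hv.2 _ (hid.2 a ha e he.2).1) (hJ _ _ (hv.2 a ha))
        have hk' : it br (D ⊓ ch (i + 1)) (V ⊓ cen br (ch i) J) k ≤ J := by
          refine (it_mono br (inf_le_left.trans hDN) ((inf_le_left.trans hVP).trans hPN) k).trans ?_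
          rw [hN]; exact bot_le
        obtain ⟨v, hv, hvJ, hv'⟩ := nilFix hst' hk' fun h => hv₀J (h ⟨hv₀, hv₀'⟩)
        refine ⟨v, hv.1, hvJ, fun e he => ?_⟩
        have : e ∈ D ⊔ C := by rw [hDC]; trivial
        obtain ⟨d, hd, c, hc, rfl⟩ := Submodule.mem_sup.1 this
        rw [map_add, LinearMap.add_apply]
        refine add_mem (hv' d ⟨hd, ?_⟩) (hv.2 c (hCi hc))
        have := sub_mem he (hid.1 (hCi hc))
        rwa [add_sub_cancel_right] at this
    obtain ⟨v, hv, hvJ, hv'⟩ := (key n le_rfl).2 P le_rfl hPJ fun e _ v hv => hP e v hv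
    refine ⟨v, hv, hvJ, fun x => ⟨0, ?_⟩⟩
    rw [zero_smul, sub_zero]
    exact hv' x (by rw [hn]; trivial)
  · -- here `P ⊓ R` is one-dimensional modulo `J`
    obtain ⟨v, hv, hvJ⟩ := SetLike.not_le_iff_exists.1 hPR
    have hin : ∀ u ∈ P ⊓ R, u ∈ D → u ∈ J := fun u hu huD =>
      hBJ ⟨hu.1, hcap ⟨huD, hRC hu.2⟩⟩
    refine ⟨v, hv.1, hvJ, fun x => ?_⟩
    have hxv : br x v ∈ P ⊓ R := (hP.inf hR) x v hv
    obtain ⟨c, hc⟩ := hD v (hPN hv.1) (fun h => hvJ (hin v hv h)) _ (hPN hxv.1)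
    exact ⟨c, hin _ (sub_mem hxv (Submodule.smul_mem _ c hv)) hc⟩

/-- If all chief factors of `L` in `P/B` are one-dimensional, then so are those of any ideal `A ≤ P`
of `L`. For a given `J`, enlarge it to an ideal `K` maximal subject to `K ∩ A ≤ J`; a
one-dimensional ideal of `L/K` then meets the image of `A`. -/
theorem SE.sub [FiniteDimensional F L] {br : L →ₗ[F] L →ₗ[F] L} {P B A : Submodule F L}
    (h : SE br P B) (hA : Id br A) (hAP : A ≤ P) : SE br A B := by
  intro J hJ hBJ hAJ
  obtain ⟨K, ⟨hK, hJK, hKA⟩, hmax⟩ := exists_max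
    (fun K => Id br K ∧ J ≤ K ∧ K ⊓ A ≤ J) ⟨J, hJ, le_rfl, inf_le_left⟩
  obtain ⟨v, hv, hvK, hx⟩ := h K hK (hBJ.trans hJK) fun hPK =>
    hAJ ((le_inf (hAP.trans hPK) le_rfl).trans hKA)
  have hK' : Id br (K ⊔ span F {v}) := by
    intro x y hy
    obtain ⟨a, ha, z, hz, rfl⟩ := Submodule.mem_sup.1 hy
    obtain ⟨t, rfl⟩ := Submodule.mem_span_singleton.1 hz
    obtain ⟨c, hc⟩ := hx x
    have : br x (a + t • v) = (br x a + t • (br x v - c • v)) + (t * c) • v := by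
      rw [map_add, map_smul, smul_sub, mul_smul]; abel
    rw [this]
    exact add_mem (Submodule.mem_sup_left (add_mem (hK x a ha) (K.smul_mem t hc)))
      (Submodule.mem_sup_right (Submodule.smul_mem _ _ (Submodule.mem_span_singleton_self v)))
  have hnot : ¬ (K ⊔ span F {v}) ⊓ A ≤ J := by
    intro hle
    have := hmax _ ⟨hK', hJK.trans le_sup_left, hle⟩ le_sup_left
    exact hvK (this ▸ Submodule.mem_sup_right (Submodule.mem_span_singleton_self v))
  obtain ⟨w, hw, hwJ⟩ := SetLike.not_le_iff_exists.1 hnot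
  refine ⟨w, hw.2, hwJ, fun x => ?_⟩
  obtain ⟨a, ha, z, hz, hazw⟩ := Submodule.mem_sup.1 hw.1
  obtain ⟨t, rfl⟩ := Submodule.mem_span_singleton.1 hz
  have ht : t ≠ 0 := by
    rintro rfl
    rw [zero_smul, add_zero] at hazw
    exact hwJ (hKA ⟨hazw ▸ ha, hw.2⟩)
  obtain ⟨a', ha', z', hz', he⟩ := Submodule.mem_sup.1 (hK' x w hw.1)
  obtain ⟨t', rfl⟩ := Submodule.mem_span_singleton.1 hz'
  refine ⟨t' / t, hKA ⟨?_, sub_mem (hA x w hw.2) (A.smul_mem _ hw.2)⟩⟩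
  have : br x w - (t' / t) • w = a' - (t' / t) • a := by
    rw [← he, ← hazw, smul_add, smul_smul, div_mul_cancel₀ _ ht]; abel
  rw [this]
  exact sub_mem ha' (K.smul_mem _ ha)

/-- Supersolvable embedding is inherited by the intersection: `B₁/(B₁ ∩ B₂)` is isomorphic to
`(B₁ + B₂)/B₂`. -/
theorem SE.inf [FiniteDimensional F L] {br : L →ₗ[F] L →ₗ[F] L} {P B₁ B₂ : Submodule F L}
    (h₁ : SE br P B₁) (h₂ : SE br P B₂) (hB₁ : Id br B₁) (hB₂ : Id br B₂) (hP₁ : B₁ ≤ P) :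
    SE br P (B₁ ⊓ B₂) := by
  intro J hJ hBJ hPJ
  by_cases h : B₁ ≤ J
  · exact h₁ J hJ h hPJ
  have hin : ∀ u ∈ B₁, u ∈ (J ⊓ B₁) ⊔ B₂ → u ∈ J := by
    intro u hu hu'
    obtain ⟨a, ha, b, hb, rfl⟩ := Submodule.mem_sup.1 hu'
    refine add_mem ha.1 (hBJ ⟨?_, hb⟩)
    have := sub_mem hu ha.2
    rwa [add_sub_cancel_left] at this
  obtain ⟨w, hw, hwJ, hx⟩ := h₂.sub hB₁ hP₁ ((J ⊓ B₁) ⊔ B₂) ((hJ.inf hB₁).sup hB₂) le_sup_right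
    fun hle => h fun u hu => hin u hu (hle hu)
  refine ⟨w, hP₁ hw, fun h' => hwJ (Submodule.mem_sup_left ⟨h', hw⟩), fun x => ?_⟩
  obtain ⟨c, hc⟩ := hx x
  exact ⟨c, hin _ (sub_mem (hB₁ x w hw) (B₁.smul_mem c hw)) hc⟩


/-! ### The maximal nilpotent subalgebra equals the nilradical -/

/-- `D` is a maximal subalgebra of `N` of codimension one. -/
def Hyper (br : L →ₗ[F] L →ₗ[F] L) (D N : Submodule F L) : Prop :=
  IsMaximalSubalgOf br D N ∧ ∀ v ∈ N, v ∉ D → ∀ w ∈ N, ∃ c : F, w - c • v ∈ D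

/-- A subspace `E ⊇ [N, N]` of `N` is the intersection of the maximal subalgebras of codimension one
that contain it. -/
theorem exists_hyper {br : L →ₗ[F] L →ₗ[F] L} {N E : Submodule F L}
    (hNN : brSpan br N N ≤ E) (hE : E ≤ N) {b : L} (hb : b ∈ N) (hbE : b ∉ E) :
    ∃ D, Hyper br D N ∧ E ≤ D ∧ b ∉ D := by
  obtain ⟨f, hfb, hf⟩ := Submodule.exists_le_ker_of_notMem hbE
  have hco : ∀ v ∈ N, v ∉ N ⊓ LinearMap.ker f → ∀ w ∈ N,
      ∃ c : F, w - c • v ∈ N ⊓ LinearMap.ker f := by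
    intro v hv hvD w hw
    have hfv : f v ≠ 0 := fun h => hvD ⟨hv, h⟩
    refine ⟨f w / f v, sub_mem hw (N.smul_mem _ hv), ?_⟩
    show f (w - (f w / f v) • v) = 0
    rw [map_sub, map_smul, smul_eq_mul, div_mul_cancel₀ _ hfv, sub_self]
  have hED : E ≤ N ⊓ LinearMap.ker f := le_inf hE hf
  refine ⟨N ⊓ LinearMap.ker f, ⟨⟨?_, ?_, ?_⟩, hco⟩, hED, fun h => hfb h.2⟩
  · intro x hx y hy
    exact hED (hNN (mem_brSpan br hx.1 hy.1))
  · exact lt_of_le_of_ne inf_le_left fun h => hfb (h.ge hb).2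
  · intro K _ hDK hKN
    by_cases h : K ≤ N ⊓ LinearMap.ker f
    · exact Or.inl (le_antisymm h hDK)
    · obtain ⟨v, hv, hvD⟩ := SetLike.not_le_iff_exists.1 h
      refine Or.inr (le_antisymm hKN fun w hw => ?_)
      obtain ⟨c, hc⟩ := hco v (hKN hv) hvD w hw
      have := add_mem (hDK hc) (K.smul_mem c hv)
      rwa [sub_add_cancel] at this

/-- Intersecting `P` with the cores of all maximal subalgebras of codimension one in `N` leaves an
ideal `B` for which the chief factors in `P/B` are one-dimensional. By finite dimension a minimal
supersolvably embedded `B` does this. -/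
theorem exists_B [FiniteDimensional F L] {br : L →ₗ[F] L →ₗ[F] L} (hL : LieB br)
    {P N : Submodule F L} (hP : Id br P) (hPN : P ≤ N) {k : ℕ} (hN : it br N N k = ⊥)
    (h : ∀ D, IsMaximalSubalgOf br D N → IsWeakCIdeal br D) :
    ∃ B, Id br B ∧ B ≤ P ∧ SE br P B ∧ ∀ D, Hyper br D N → B ≤ D := by
  obtain ⟨B, ⟨hB, hBP, hse⟩, hmin⟩ := exists_min (fun B => Id br B ∧ B ≤ P ∧ SE br P B)
    ⟨P, hP, le_rfl, fun J _ h1 h2 => absurd h1 h2⟩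
  refine ⟨B, hB, hBP, hse, fun D hD => ?_⟩
  have hc : Id br (P ⊓ leibCore br D) := hP.inf (id_of_isLeibIdeal (leibCore_isIdeal br D))
  have h1 := se_core hL hP hPN hN hD.1.2.1.le hD.2 (h D hD.1)
  have := hmin (B ⊓ (P ⊓ leibCore br D))
    ⟨hB.inf hc, inf_le_left.trans hBP, hse.inf h1 hB hc hBP⟩ inf_le_left
  rw [← this]
  exact inf_le_right.trans (inf_le_right.trans (leibCore_le br D))

/-- The common annihilator `X` of the one-dimensional chief factors in a series from `B` to `P` is an
ideal that contains `[L, L]`, contains the nilpotent subalgebra `N ⊇ P`, and acts nilpotently on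
`P/B`. The proof takes the longest initial part `K/B` of such a series for which `X` exists. -/
theorem exists_X [FiniteDimensional F L] {br : L →ₗ[F] L →ₗ[F] L} (hL : LieB br)
    {P N B : Submodule F L} (hPN : P ≤ N) {k : ℕ} (hN : it br N N k = ⊥)
    (hB : Id br B) (hBP : B ≤ P) (hse : SE br P B) :
    ∃ X, Id br X ∧ (∀ x y, br x y ∈ X) ∧ N ≤ X ∧ ∃ k, it br X P k ≤ B := by
  obtain ⟨K, ⟨hK, hBK, hKP, X, hX, hX1, hX2, m, hm⟩, hmax⟩ := exists_max
    (fun K => Id br K ∧ B ≤ K ∧ K ≤ P ∧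
      ∃ X, Id br X ∧ (∀ x y, br x y ∈ X) ∧ N ≤ X ∧ ∃ k, it br X K k ≤ B)
    ⟨B, hB, le_rfl, hBP, ⊤, id_top br, fun _ _ => trivial, le_top, 0, le_rfl⟩
  by_cases hPK : P ≤ K
  · exact ⟨X, hX, hX1, hX2, m, (le_antisymm hKP hPK) ▸ hm⟩
  exfalso
  obtain ⟨v, hv, hvK, hx⟩ := hse K hK hBK hPK
  have hmem : ∀ x a, a ∈ K → ∀ c : F, br x (c • v + a) - c • br x v ∈ K := by
    intro x a ha c
    rw [map_add, map_smul, add_sub_cancel_left]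
    exact hK x a ha
  have hK' : Id br (K ⊔ span F {v}) := by
    intro x y hy
    obtain ⟨a, ha, z, hz, rfl⟩ := Submodule.mem_sup.1 hy
    obtain ⟨t, rfl⟩ := Submodule.mem_span_singleton.1 hz
    obtain ⟨c, hc⟩ := hx x
    have : br x (a + t • v) = (br x a + t • (br x v - c • v)) + (t * c) • v := by
      rw [map_add, map_smul, smul_sub, mul_smul]; abel
    rw [this]
    exact add_mem (Submodule.mem_sup_left (add_mem (hK x a ha) (K.smul_mem t hc)))
      (Submodule.mem_sup_right (Submodule.smul_mem _ _ (Submodule.mem_span_singleton_self v)))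
  -- the annihilator of the one-dimensional factor `(K + F v) / K`
  let X₂ : Submodule F L := K.comap (br.flip v)
  have hX₂ : ∀ x, x ∈ X₂ ↔ br x v ∈ K := fun x => Iff.rfl
  have hder : ∀ x y, br x y ∈ X₂ := by
    intro x y
    rw [hX₂, hL.jac']
    obtain ⟨a, ha⟩ := hx x
    obtain ⟨b, hb⟩ := hx y
    have e : br x (br y v) - br y (br x v) = br x (br y v - b • v) - br y (br x v - a • v)
        + b • (br x v - a • v) - a • (br y v - b • v) := by
      simp only [map_sub, map_smul, smul_sub, smul_comm a b]; abel
    rw [e]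
    exact sub_mem (add_mem (sub_mem (hK _ _ hb) (hK _ _ ha)) (K.smul_mem _ ha)) (K.smul_mem _ hb)
  have hNX : N ≤ X₂ := by
    intro n hn
    rw [hX₂]
    obtain ⟨c, hc⟩ := hx n
    have hpow : ∀ j, ∃ w ∈ it br N N j, w - c ^ j • v ∈ K := by
      intro j
      induction j with
      | zero => exact ⟨v, hPN hv, by rw [pow_zero, one_smul, sub_self]; exact zero_mem _⟩
      | succ j ih =>
        obtain ⟨w, hw, hwK⟩ := ih
        refine ⟨br n w, mem_brSpan br hn hw, ?_⟩
        have : br n w - c ^ (j + 1) • v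
            = br n (w - c ^ j • v) + c ^ j • (br n v - c • v) := by
          rw [map_sub, map_smul, smul_sub, smul_smul, pow_succ]; abel
        rw [this]
        exact add_mem (hK _ _ hwK) (K.smul_mem _ hc)
    obtain ⟨w, hw, hwK⟩ := hpow k
    rw [hN, Submodule.mem_bot] at hw
    rw [hw, zero_sub, neg_mem_iff] at hwK
    by_cases h0 : c = 0
    · rwa [h0, zero_smul, sub_zero] at hc
    · exact absurd ((K.smul_mem_iff (pow_ne_zero k h0)).1 hwK) hvK
  have h1 : Id br (X ⊓ X₂) := fun x y hy => ⟨hX x y hy.1, hder x y⟩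
  have := hmax (K ⊔ span F {v}) ⟨hK', hBK.trans le_sup_left,
    sup_le hKP ((Submodule.span_singleton_le_iff_mem _ _).2 hv), X ⊓ X₂, h1,
    fun x y => ⟨hX1 x y, hder x y⟩, le_inf hX2 hNX, m + 1, ?_⟩ le_sup_left
  · exact hvK (this ▸ Submodule.mem_sup_right (Submodule.mem_span_singleton_self v))
  · rw [it_succ']
    refine (it_mono br inf_le_left ?_ m).trans hm
    refine brSpan_le.2 fun x hx y hy => ?_
    obtain ⟨a, ha, z, hz, rfl⟩ := Submodule.mem_sup.1 hy
    obtain ⟨t, rfl⟩ := Submodule.mem_span_singleton.1 hz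
    rw [map_add, map_smul]
    exact add_mem (hK x a ha) (K.smul_mem t hx.2)

theorem pow_mem_of_stable {f : Module.End F L} {Z : Submodule F L} (h : ∀ z ∈ Z, f z ∈ Z)
    (n : ℕ) {z : L} (hz : z ∈ Z) : (f ^ n) z ∈ Z := by
  induction n with
  | zero => exact hz
  | succ n ih => rw [pow_succ', Module.End.mul_apply]; exact h _ ih

/-- Leibniz expansion: `(ad q)^n [x, y]` with `n = i + j` lies in `Z` as soon as every term
`[(ad q)^a x, (ad q)^b y]` with `a + b = n` does, and each such term has `a ≥ i` or `b ≥ j`. The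
subspaces `S₁`, `S₂` hold `(ad q)^i x` and `(ad q)^j y`. -/
theorem pow_bracket {br : L →ₗ[F] L →ₗ[F] L} (hL : LieB br) (q : L)
    {S₁ U₁ S₂ U₂ Z : Submodule F L} (hU₁ : ∀ x ∈ U₁, br q x ∈ U₁) (hU₂ : ∀ x ∈ U₂, br q x ∈ U₂)
    (hZ : ∀ x ∈ Z, br q x ∈ Z) (h₁ : ∀ x ∈ S₁, ∀ y ∈ U₂, br x y ∈ Z)
    (h₂ : ∀ x ∈ U₁, ∀ y ∈ S₂, br x y ∈ Z) (n : ℕ) :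
    ∀ i j, i + j = n → ∀ x ∈ U₁, ∀ y ∈ U₂, ((br q : Module.End F L) ^ i) x ∈ S₁ →
      ((br q : Module.End F L) ^ j) y ∈ S₂ → ((br q : Module.End F L) ^ n) (br x y) ∈ Z := by
  induction n with
  | zero =>
    intro i j hij x hx y hy hx' _
    obtain rfl : i = 0 := by omega
    exact h₁ x hx' y hy
  | succ n ih =>
    intro i j hij x hx y hy hx' hy'
    cases i with
    | zero => exact pow_mem_of_stable hZ _ (h₁ x hx' y hy)
    | succ i =>
      cases j with
      | zero => exact pow_mem_of_stable hZ _ (h₂ x hx y hy')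
      | succ j =>
        rw [pow_succ, Module.End.mul_apply, hL.jac, map_add]
        refine add_mem (ih i (j + 1) (by omega) _ (hU₁ x hx) y hy ?_ hy')
          (ih (i + 1) j (by omega) x hx _ (hU₂ y hy) hx' ?_)
        · rwa [pow_succ, Module.End.mul_apply] at hx'
        · rwa [pow_succ, Module.End.mul_apply] at hy'

/-- A Frattini-type obstruction. Suppose `ad q` is nilpotent on `L/Y` and injective on `Y/Z`. Its
Fitting null component `T` modulo `Z` is a subalgebra with `L = Y + T`, so `N = Y + (N ∩ T)`, and
`[Y, N] + Z + (N ∩ T)` contains `[N, N]`. If every maximal subalgebra of codimension one in `N`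
contains `Y`, that subspace must be all of `N`; hence `Y = [N, Y] + Z`, contradicting nilpotency
of `N`. -/
theorem no_split [FiniteDimensional F L] {br : L →ₗ[F] L →ₗ[F] L} (hL : LieB br)
    {N Y Z : Submodule F L} (hNsub : IsSubalg br N) (hY : Id br Y) (hZ : Id br Z) (hZY : Z ≤ Y)
    (hYZ : ¬ Y ≤ Z) (hYN : Y ≤ N) {k : ℕ} (hN : it br N N k = ⊥)
    (hD : ∀ D, Hyper br D N → Y ≤ D) (q : L)
    (h₁ : ∀ x, ∃ i, ((br q : Module.End F L) ^ i) x ∈ Y)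
    (h₂ : ∀ y ∈ Y, ∀ i, ((br q : Module.End F L) ^ i) y ∈ Z → y ∈ Z) : False := by
  set f : Module.End F L := br q with hf
  have fZ : ∀ z ∈ Z, f z ∈ Z := fun z hz => hZ q z hz
  have fY : ∀ z ∈ Y, f z ∈ Y := fun z hz => hY q z hz
  have up : ∀ x i j, (f ^ i) x ∈ Z → (f ^ (j + i)) x ∈ Z := by
    intro x i j h
    rw [pow_add, Module.End.mul_apply]
    exact pow_mem_of_stable fZ j h
  let T : Submodule F L :=
    { carrier := {x | ∃ i, (f ^ i) x ∈ Z}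
      zero_mem' := ⟨0, by rw [map_zero]; exact zero_mem _⟩
      add_mem' := by
        rintro a b ⟨i, hi⟩ ⟨j, hj⟩
        refine ⟨i + j, ?_⟩
        rw [map_add]
        exact add_mem (by rw [add_comm]; exact up a i j hi) (up b j i hj)
      smul_mem' := by
        rintro c a ⟨i, hi⟩
        exact ⟨i, by rw [map_smul]; exact Z.smul_mem c hi⟩ }
  have hT : ∀ x, x ∈ T ↔ ∃ i, (f ^ i) x ∈ Z := fun x => Iff.rfl
  have hTsub : ∀ x ∈ T, ∀ y ∈ T, br x y ∈ T := by
    rintro x ⟨i, hi⟩ y ⟨j, hj⟩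
    exact ⟨i + j, pow_bracket hL q (S₁ := Z) (U₁ := ⊤) (S₂ := Z) (U₂ := ⊤) (fun _ _ => trivial)
      (fun _ _ => trivial) fZ (fun x hx y _ => hZ.right hL hx y) (fun x _ y hy => hZ x y hy)
      (i + j) i j rfl x trivial y trivial hi hj⟩
  have hsplit : ∀ x, ∃ y ∈ Y, x - y ∈ T := by
    intro x
    obtain ⟨i, hi⟩ := h₁ x
    have hanti : Antitone fun m => Y.map (f ^ m) ⊔ Z := by
      refine antitone_nat_of_succ_le fun m => sup_le ?_ le_sup_right
      rintro _ ⟨y, hy, rfl⟩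
      rw [pow_succ, Module.End.mul_apply]
      exact Submodule.mem_sup_left ⟨f y, fY y hy, rfl⟩
    obtain ⟨m, hm⟩ := stab hanti
    have hx : (f ^ (m + i)) x ∈ Y.map (f ^ m) ⊔ Z := by
      rw [pow_add, Module.End.mul_apply]
      exact Submodule.mem_sup_left ⟨_, hi, rfl⟩
    rw [← hm (m + i) (by omega)] at hx
    obtain ⟨_, ⟨y, hy, rfl⟩, z, hz, hxz⟩ := Submodule.mem_sup.1 hx
    refine ⟨y, hy, m + i, ?_⟩
    rw [map_sub, ← hxz, add_sub_cancel_left]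
    exact hz
  set E := brSpan br Y N ⊔ Z ⊔ (T ⊓ N) with hE
  have hYNY : brSpan br Y N ≤ Y := brSpan_le.2 fun x hx y _ => hY.right hL hx y
  have hEN : E ≤ N := sup_le (sup_le (hYNY.trans hYN) (hZY.trans hYN)) inf_le_right
  have hNE : brSpan br N N ≤ E := by
    refine brSpan_le.2 fun x hx x' hx' => ?_
    obtain ⟨y, hy, ht⟩ := hsplit x
    obtain ⟨y', hy', ht'⟩ := hsplit x'
    have htN := sub_mem hx (hYN hy)
    have htN' := sub_mem hx' (hYN hy')
    have e : br x x' = (br y x' - br y' (x - y)) + br (x - y) (x' - y') := by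
      rw [hL.skew y' (x - y)]; simp only [map_sub, LinearMap.sub_apply]; abel
    rw [e]
    refine add_mem (Submodule.mem_sup_left (Submodule.mem_sup_left (sub_mem ?_ ?_)))
      (Submodule.mem_sup_right ⟨hTsub _ ht _ ht', hNsub _ htN _ htN'⟩)
    · exact mem_brSpan br hy hx'
    · exact mem_brSpan br hy' htN
  have hNleE : N ≤ E := by
    intro b hb
    by_contra hbE
    obtain ⟨D, hDh, hED, hbD⟩ := exists_hyper hNE hEN hb hbE
    obtain ⟨y, hy, ht⟩ := hsplit b
    refine hbD ?_
    have := add_mem (hD D hDh hy)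
      (hED (Submodule.mem_sup_right (⟨ht, sub_mem hb (hYN hy)⟩ : b - y ∈ T ⊓ N)))
    rwa [add_sub_cancel] at this
  have hYle : Y ≤ brSpan br N Y ⊔ Z := by
    intro y hy
    rw [brSpan_comm hL]
    obtain ⟨a, ha, t, ht, rfl⟩ := Submodule.mem_sup.1 (hNleE (hYN hy))
    have haY : a ∈ Y := (sup_le hYNY hZY) ha
    have htY : t ∈ Y := by
      have := sub_mem hy haY
      rwa [add_sub_cancel_left] at this
    obtain ⟨i, hi⟩ := ht.1
    exact add_mem ha (Submodule.mem_sup_right (h₂ t htY i hi))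
  refine hYZ ((nilPerf (fun e _ v hv => hZ e v hv) hYle k).trans (sup_le ?_ le_rfl))
  refine (it_mono br le_rfl hYN k).trans ?_
  rw [hN]; exact bot_le

/-- Let `Y/Z` be a chief factor with `Y = [Q, Y]` on which the elements of `Q` act by commuting
operators. Then some `q ∈ Q` does not act nilpotently: otherwise `Q` would kill a minimal nonzero
`Q`-submodule `W/Z`, and the vectors of `Y/Z` killed by `Q` form an ideal. -/
theorem exists_q [FiniteDimensional F L] {br : L →ₗ[F] L →ₗ[F] L} (hL : LieB br)
    {P Q Y Z : Submodule F L} (hQ : Id br Q) (hY : Id br Y) (hZ : Id br Z) (hZY : Z ≤ Y)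
    (hYZ : ¬ Y ≤ Z) (hmin : ∀ K, Id br K → Z ≤ K → K ≤ Y → K = Z ∨ K = Y)
    (hQQ : ∀ x ∈ Q, ∀ y ∈ Q, br x y ∈ P) (hPY : ∀ x ∈ P, ∀ y ∈ Y, br x y ∈ Z)
    (hQY : Y ≤ brSpan br Q Y) :
    ∃ q ∈ Q, ∃ y ∈ Y, ∀ i, ((br q : Module.End F L) ^ i) y ∉ Z := by
  by_contra! hcon
  obtain ⟨W, ⟨hZW, hWY, hWZ, hst⟩, hWmin⟩ := exists_min
    (fun W => Z ≤ W ∧ W ≤ Y ∧ ¬ W ≤ Z ∧ ∀ q ∈ Q, ∀ w ∈ W, br q w ∈ W)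
    ⟨Y, hZY, le_rfl, hYZ, fun q _ w hw => hY q w hw⟩
  have hW : W ≤ cen br Q Z := by
    intro w₁ hw₁ q hq
    have hne : ¬ W ⊓ Z.comap (br q) ≤ Z := by
      obtain ⟨w, hw, hwZ⟩ := SetLike.not_le_iff_exists.1 hWZ
      classical
      have hex := hcon q hq w (hWY hw)
      have hs := Nat.find_spec hex
      have hpos : Nat.find hex ≠ 0 := by
        intro h0
        rw [h0] at hs
        exact hwZ hs
      obtain ⟨i, hi⟩ := Nat.exists_eq_succ_of_ne_zero hpos
      have hlt := Nat.find_min hex (m := i) (by omega)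
      rw [hi, Nat.succ_eq_add_one, pow_succ', Module.End.mul_apply] at hs
      exact fun hle => hlt (hle ⟨pow_mem_of_stable (hst q hq) i hw, hs⟩)
    have := hWmin (W ⊓ Z.comap (br q)) ⟨le_inf hZW fun z hz => hZ q z hz, inf_le_left.trans hWY,
      hne, ?_⟩ inf_le_left
    · rw [← this] at hw₁
      exact hw₁.2
    · intro q' hq' w hw
      refine ⟨hst q' hq' w hw.1, ?_⟩
      show br q (br q' w) ∈ Z
      rw [hL.jac]
      exact add_mem (hPY _ (hQQ q hq q' hq') w (hWY hw.1)) (hZ _ _ hw.2)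
  rcases hmin (cen br Q Z ⊓ Y) ((hQ.cen hL hZ).inf hY) (le_inf (fun z hz q _ => hZ q z hz) hZY)
    inf_le_right with h | h
  · exact hWZ ((le_inf hW hWY).trans h.le)
  · refine hYZ (hQY.trans (brSpan_le.2 fun q hq y hy => ?_))
    rw [← h] at hy
    exact hy.1 q hq

theorem derSeries_id {br : L →ₗ[F] L →ₗ[F] L} (hL : LieB br) (n : ℕ) :
    Id br (derSeriesOf br ⊤ n) := by
  induction n with
  | zero => exact id_top br
  | succ n ih => exact ih.brSpan hL ih

/-- If `X ≰ P`, solvability gives an ideal `Q` with `P < Q ≤ X` and `[Q, Q] ≤ P`. As `Q` acts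
nilpotently on `P/B`, its residual `Y` lies in `B`, and `Y ≠ 0` by maximality of the nilpotent ideal
`P`. A chief factor `Y/Z` of `L` then satisfies the conditions of `exists_q` and, for the resulting
`q`, those of `no_split`. -/
theorem X_le_P [FiniteDimensional F L] {br : L →ₗ[F] L →ₗ[F] L} (hL : LieB br)
    (hsolv : IsSolvableSub br ⊤) {P N B X : Submodule F L} (hP : Id br P)
    (hPmax : ∀ Q, Id br Q → P ≤ Q → (∃ k, it br Q Q k = ⊥) → Q = P)
    (hNsub : IsSubalg br N) (hPN : P ≤ N) {k : ℕ} (hN : it br N N k = ⊥) (hBP : B ≤ P)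
    (hD : ∀ D, Hyper br D N → B ≤ D) (hX : Id br X) (hNX : N ≤ X) {m : ℕ}
    (hm : it br X P m ≤ B) : X ≤ P := by
  by_contra hXP
  classical
  have hex : ∃ j, X ⊓ derSeriesOf br ⊤ j ≤ P := by
    obtain ⟨n, hn⟩ := hsolv
    exact ⟨n, by rw [hn, inf_bot_eq]; exact bot_le⟩
  have hs := Nat.find_spec hex
  have hpos : Nat.find hex ≠ 0 := by
    intro h0
    rw [h0] at hs
    exact hXP fun x hx => hs ⟨hx, trivial⟩
  obtain ⟨j, hj⟩ := Nat.exists_eq_succ_of_ne_zero hpos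
  have hlt := Nat.find_min hex (m := j) (by omega)
  rw [hj] at hs
  set Q := P ⊔ (X ⊓ derSeriesOf br ⊤ j) with hQdef
  have hQ : Id br Q := hP.sup (hX.inf (derSeries_id hL j))
  have hQX : Q ≤ X := sup_le (hPN.trans hNX) inf_le_left
  have hQQ : ∀ x ∈ Q, ∀ y ∈ Q, br x y ∈ P := by
    intro x hx y hy
    obtain ⟨p, hp, u, hu, rfl⟩ := Submodule.mem_sup.1 hx
    obtain ⟨p', hp', u', hu', rfl⟩ := Submodule.mem_sup.1 hy
    rw [map_add]
    refine add_mem (hP _ _ hp') ?_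
    rw [map_add, LinearMap.add_apply]
    exact add_mem (hP.right hL hp _) (hs ⟨hX _ _ hu'.1, mem_brSpan br hu.2 hu'.2⟩)
  obtain ⟨n, hn⟩ := stab (it_anti br (E := Q) (V := ⊤) le_top)
  set Y := it br Q ⊤ n with hYdef
  have hY : Id br Y := hQ.it hL (id_top br) n
  have hQY : brSpan br Q Y = Y := hn (n + 1) (by omega)
  have hYB : Y ≤ B := by
    have h2 : it br Q ⊤ 2 ≤ P := brSpan_le.2 fun x hx y hy =>
      hQQ x hx y ((brSpan_le.2 fun a ha b _ => hQ.right hL ha b : brSpan br Q ⊤ ≤ Q) hy)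
    have h3 : it br Q ⊤ (2 + m) ≤ B := by
      rw [it_add]
      exact (it_mono br hQX h2 m).trans hm
    rw [← hn (n + (2 + m)) (by omega)]
    exact (it_anti br (E := Q) (V := ⊤) le_top (by omega)).trans h3
  have hYP := hYB.trans hBP
  have hYbot : Y ≠ ⊥ := by
    intro h0
    have := hPmax Q hQ le_sup_left ⟨n, eq_bot_iff.2 (h0 ▸ it_mono br le_rfl le_top n)⟩
    exact hlt (this ▸ le_sup_right)
  obtain ⟨Z, ⟨hZ, hZY, hne⟩, hZmax⟩ := exists_max (fun Z => Id br Z ∧ Z ≤ Y ∧ Z ≠ Y)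
    ⟨⊥, id_bot br, bot_le, hYbot.symm⟩
  have hYZ : ¬ Y ≤ Z := fun h => hne (le_antisymm hZY h)
  have hmin : ∀ K, Id br K → Z ≤ K → K ≤ Y → K = Z ∨ K = Y := by
    intro K hK h1 h2
    by_cases h : K = Y
    · exact Or.inr h
    · exact Or.inl (hZmax K ⟨hK, h2, h⟩ h1)
  have hPY : ∀ x ∈ P, ∀ y ∈ Y, br x y ∈ Z := by
    have hle : brSpan br P Y ≤ Y := brSpan_le.2 fun x _ y hy => hY x y hy
    rcases hmin (brSpan br P Y ⊔ Z) ((hP.brSpan hL hY).sup hZ) le_sup_right (sup_le hle hZY)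
      with h | h
    · intro x hx y hy
      rw [← h]
      exact Submodule.mem_sup_left (mem_brSpan br hx hy)
    · refine absurd ((nilPerf (fun e _ v hv => hZ e v hv) h.ge k).trans (sup_le ?_ le_rfl)) hYZ
      refine (it_mono br hPN (hYP.trans hPN) k).trans ?_
      rw [hN]; exact bot_le
  obtain ⟨q, hq, y, hy, hyq⟩ := exists_q hL hQ hY hZ hZY hYZ hmin hQQ hPY hQY.ge
  have h₁ : ∀ x, ∃ i, ((br q : Module.End F L) ^ i) x ∈ Y := by
    intro x
    refine ⟨n, ?_⟩
    have : ∀ i, ((br q : Module.End F L) ^ i) x ∈ it br Q ⊤ i := by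
      intro i
      induction i with
      | zero => trivial
      | succ i ih => rw [pow_succ', Module.End.mul_apply]; exact mem_brSpan br hq ih
    exact this n
  -- the Fitting null component of `ad q` on `Y/Z` is an ideal
  let V : Submodule F L :=
    { carrier := {x | x ∈ Y ∧ ∃ i, ((br q : Module.End F L) ^ i) x ∈ Z}
      zero_mem' := ⟨zero_mem _, 0, by rw [map_zero]; exact zero_mem _⟩
      add_mem' := by
        rintro a b ⟨ha, i, hi⟩ ⟨hb, j, hj⟩
        refine ⟨add_mem ha hb, i + j, ?_⟩
        rw [map_add]
        refine add_mem ?_ ?_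
        · rw [add_comm, pow_add, Module.End.mul_apply]
          exact pow_mem_of_stable (hZ q) j hi
        · rw [pow_add, Module.End.mul_apply]
          exact pow_mem_of_stable (hZ q) i hj
      smul_mem' := by
        rintro c a ⟨ha, i, hi⟩
        exact ⟨Y.smul_mem c ha, i, by rw [map_smul]; exact Z.smul_mem c hi⟩ }
  have hV : Id br V := by
    rintro x v ⟨hv, j, hj⟩
    obtain ⟨i, hi⟩ := h₁ x
    exact ⟨hY x v hv, i + j, pow_bracket hL q (S₁ := Y) (U₁ := ⊤) (S₂ := Z) (U₂ := Y)
      (fun _ _ => trivial) (hY q) (hZ q) (fun a ha b hb => hPY a (hYP ha) b hb)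
      (fun a _ b hb => hZ a b hb) (i + j) i j rfl x trivial v hv hi hj⟩
  have hVZ : V = Z := by
    refine (hmin V hV (fun z hz => ⟨hZY hz, 0, hz⟩) fun v hv => hv.1).resolve_right fun h => ?_
    rw [← h] at hy
    obtain ⟨i, hi⟩ := hy.2
    exact hyq i hi
  refine no_split hL hNsub hY hZ hZY hYZ (hYP.trans hPN) hN (fun D hDh => hYB.trans (hD D hDh)) q
    h₁ fun v hv i hi => ?_
  rw [← hVZ]
  exact ⟨hv, i, hi⟩

/-! ### Lower central factors and the Lie case -/

/-- One-dimensional chief factors in `P/[P, P]` force the same in every factor of the lower central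
series of `P`: modulo `J`, the bracket `[e, y]` of two common eigenvectors of `L` is again one,
with the sum of the weights as its weight. -/
theorem se_lcs {br : L →ₗ[F] L →ₗ[F] L} (hL : LieB br) {P : Submodule F L} (hP : Id br P)
    (h : SE br P (brSpan br P P)) (k : ℕ) : SE br (it br P P k) (it br P P (k + 1)) := by
  induction k with
  | zero => exact h
  | succ k ih =>
    intro J hJ hle hnot
    have hI := hP.it hL hP k
    have hT : Id br (cen br (it br P P k) J) := hI.cen hL hJ
    have hT1 : brSpan br P P ≤ cen br (it br P P k) J := by
      refine brSpan_le.2 fun a ha b hb c hc => hle ?_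
      rw [hL.skew, hL.jac']
      exact neg_mem (sub_mem (mem_brSpan br ha (mem_brSpan br hb hc))
        (mem_brSpan br hb (mem_brSpan br ha hc)))
    have hT2 : ¬ P ≤ cen br (it br P P k) J := by
      intro hle'
      refine hnot (brSpan_le.2 fun a ha b hb => ?_)
      rw [hL.skew]
      exact neg_mem (hle' ha b hb)
    obtain ⟨e, he, heT, hex⟩ := h _ hT hT1 hT2
    have hS : Id br (J.comap (br e) ⊓ it br P P k) := by
      rintro x y ⟨hy, hyI⟩
      refine ⟨?_, hI x y hyI⟩
      obtain ⟨c, hc⟩ := hex x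
      show br e (br x y) ∈ J
      rw [hL.jac, hL.skew e x]
      refine add_mem ?_ (hJ _ _ hy)
      have h1 := hc y hyI
      rw [hL.skew] at h1
      have h2 := add_mem (neg_mem h1) (J.smul_mem c hy)
      rw [neg_neg, map_sub, LinearMap.sub_apply, map_smul, LinearMap.smul_apply,
        sub_add_cancel] at h2
      rw [map_neg, LinearMap.neg_apply]
      exact neg_mem h2
    have hS1 : it br P P (k + 1) ≤ J.comap (br e) ⊓ it br P P k :=
      le_inf (fun a ha => hle (mem_brSpan br he ha))
        (it_anti br (brSpan_le.2 fun x _ y hy => hP x y hy) (Nat.le_succ k))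
    have hS2 : ¬ it br P P k ≤ J.comap (br e) ⊓ it br P P k := by
      intro hle'
      refine heT fun a ha => ?_
      rw [hL.skew]
      exact neg_mem (hle' ha).1
    obtain ⟨y, hy, hyS, hyx⟩ := ih _ hS hS1 hS2
    refine ⟨br e y, mem_brSpan br he hy, fun h' => hyS ⟨h', hy⟩, fun x => ?_⟩
    obtain ⟨c, hc⟩ := hex x
    obtain ⟨d, hd⟩ := hyx x
    refine ⟨c + d, ?_⟩
    have h1 := hc y hy
    rw [hL.skew, map_sub, LinearMap.sub_apply, map_smul, LinearMap.smul_apply] at h1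
    have h2 : br e (br x y - d • y) ∈ J := hd.1
    rw [map_sub, map_smul] at h2
    rw [hL.jac, add_smul]
    have := add_mem (neg_mem h1) h2
    rw [neg_neg] at this
    convert this using 1
    abel

theorem se_nilpotent {br : L →ₗ[F] L →ₗ[F] L} (hL : LieB br) {P : Submodule F L} (hP : Id br P)
    {k : ℕ} (hk : it br P P k = ⊥) (h : SE br P (brSpan br P P)) : SE br P ⊥ := by
  intro J hJ _ hPJ
  classical
  have hex : ∃ j, it br P P j ≤ J := ⟨k, by rw [hk]; exact bot_le⟩
  have hs := Nat.find_spec hex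
  have hpos : Nat.find hex ≠ 0 := by
    intro h0
    rw [h0] at hs
    exact hPJ hs
  obtain ⟨j, hj⟩ := Nat.exists_eq_succ_of_ne_zero hpos
  have hlt := Nat.find_min hex (m := j) (by omega)
  rw [hj] at hs
  obtain ⟨v, hv, h1, h2⟩ := se_lcs hL hP h j J hJ hs hlt
  exact ⟨v, it_le br (brSpan_le.2 fun x _ y hy => hP x y hy) j hv, h1, h2⟩

/-- The theorem for Lie algebras, in the form that every proper quotient of `L` has a
one-dimensional ideal. -/
theorem lie_main [FiniteDimensional F L] {br : L →ₗ[F] L →ₗ[F] L} (hL : LieB br)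
    (hsolv : IsSolvableSub br ⊤)
    (h : ∀ U : Submodule F L, IsMaximalNilpotentSub br U →
        ∀ M : Submodule F L, IsMaximalSubalgOf br M U → IsWeakCIdeal br M) : SE br ⊤ ⊥ := by
  have hnil : ∀ U, IsNilpotentSub br U ↔ ∃ k, it br U U k = ⊥ := fun U =>
    exists_congr fun k => by rw [lcsOf_eq hL]
  obtain ⟨P, ⟨hP, kP, hkP⟩, hPmax⟩ := exists_max (fun P => Id br P ∧ ∃ k, it br P P k = ⊥)
    ⟨⊥, id_bot br, 0, rfl⟩
  obtain ⟨N, ⟨hNsub, hPN, k, hN⟩, hNmax⟩ := exists_max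
    (fun N => IsSubalg br N ∧ P ≤ N ∧ ∃ k, it br N N k = ⊥)
    ⟨P, fun x _ y hy => hP x y hy, le_rfl, kP, hkP⟩
  have hNm : IsMaximalNilpotentSub br N := ⟨hNsub, (hnil N).2 ⟨k, hN⟩, fun V hV hV' hle =>
    hNmax V ⟨hV, hPN.trans hle, (hnil V).1 hV'⟩ hle⟩
  obtain ⟨B, hB, hBP, hse, hBD⟩ := exists_B hL hP hPN hN (h N hNm)
  obtain ⟨X, hX, hX', hNX, m, hm⟩ := exists_X hL hPN hN hB hBP hse
  have hXP : X ≤ P := X_le_P hL hsolv hP (fun Q hQ hle hk => hPmax Q ⟨hQ, hk⟩ hle) hNsub hPN hN hBP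
    hBD hX hNX hm
  obtain rfl : P = N := le_antisymm hPN (hNX.trans hXP)
  have hPP : brSpan br P P ≤ P := brSpan_le.2 fun x _ y hy => hP x y hy
  have hBder : B ≤ brSpan br P P := by
    intro b hb
    by_contra hb'
    obtain ⟨D, hD, -, hbD⟩ := exists_hyper le_rfl hPP (hBP hb) hb'
    exact hbD (hBD D hD hb)
  have hseP : SE br P ⊥ := se_nilpotent hL hP hkP fun J hJ hle => hse J hJ (hBder.trans hle)
  intro J hJ _ hne
  by_cases hPJ : P ≤ J
  · obtain ⟨v, hv, hvJ⟩ := SetLike.not_le_iff_exists.1 hne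
    refine ⟨v, hv, hvJ, fun x => ⟨0, ?_⟩⟩
    rw [zero_smul, sub_zero]
    exact hPJ (hXP (hX' x v))
  · obtain ⟨v, _, h1, h2⟩ := hseP J hJ bot_le hPJ
    exact ⟨v, trivial, h1, h2⟩

/-! ### Passing to the quotient by the Leibniz kernel -/

/-- In a symmetric Leibniz algebra all elements of the Leibniz kernel are central. -/
theorem kernel_central {br : L →ₗ[F] L →ₗ[F] L} (hbr : IsSymmetricLeibnizBracket br) {a : L}
    (ha : a ∈ leibnizKernel br) (x : L) : br x a = 0 ∧ br a x = 0 := by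
  have h1 : leibnizKernel br ≤ LinearMap.ker (br x) := by
    refine Submodule.span_le.2 ?_
    rintro _ ⟨y, rfl⟩
    show br x (br y y) = 0
    rw [hbr.1, sub_self]
  have h2 : leibnizKernel br ≤ LinearMap.ker (br.flip x) := by
    refine Submodule.span_le.2 ?_
    rintro _ ⟨y, rfl⟩
    show br (br y y) x = 0
    have : br y (br y x) = br (br y y) x + br y (br y x) := hbr.2.1 y y x
    exact right_eq_add.1 this
  exact ⟨h1 ha, h2 ha⟩

theorem kernel_ideal {br : L →ₗ[F] L →ₗ[F] L} (hbr : IsSymmetricLeibnizBracket br) :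
    IsLeibIdeal br (leibnizKernel br) := by
  refine ⟨le_top, fun a ha x _ => ?_⟩
  obtain ⟨h1, h2⟩ := kernel_central hbr ha x
  rw [h1, h2]
  exact ⟨zero_mem _, zero_mem _⟩

theorem quotBr_mk (br : L →ₗ[F] L →ₗ[F] L) (A : Submodule F L) (hA : IsLeibIdeal br A) (x y : L) :
    quotBr br A hA (A.mkQ x) (A.mkQ y) = A.mkQ (br x y) := rfl

theorem lieB_quot {br : L →ₗ[F] L →ₗ[F] L} (hbr : IsSymmetricLeibnizBracket br) :
    LieB (quotBr br _ (kernel_ideal hbr)) where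
  self x := by
    obtain ⟨x, rfl⟩ := Submodule.mkQ_surjective _ x
    rw [quotBr_mk, Submodule.mkQ_apply, Submodule.Quotient.mk_eq_zero]
    exact Submodule.subset_span ⟨x, rfl⟩
  jac x y z := by
    obtain ⟨x, rfl⟩ := Submodule.mkQ_surjective _ x
    obtain ⟨y, rfl⟩ := Submodule.mkQ_surjective _ y
    obtain ⟨z, rfl⟩ := Submodule.mkQ_surjective _ z
    simp only [quotBr_mk, ← map_add]
    rw [hbr.2.1]

section Quot

variable {br : L →ₗ[F] L →ₗ[F] L} {A : Submodule F L} (hA : IsLeibIdeal br A)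

theorem subalg_comap {V : Submodule F (L ⧸ A)} (hV : IsSubalg (quotBr br A hA) V) :
    IsSubalg br (V.comap A.mkQ) := fun _ hx _ hy => hV _ hx _ hy

theorem subalg_map {V : Submodule F L} (hV : IsSubalg br V) :
    IsSubalg (quotBr br A hA) (V.map A.mkQ) := by
  rintro _ ⟨x, hx, rfl⟩ _ ⟨y, hy, rfl⟩
  exact ⟨br x y, hV x hx y hy, rfl⟩

theorem idealOf_map {V W : Submodule F L} (hV : IsIdealOf br V W) :
    IsIdealOf (quotBr br A hA) (V.map A.mkQ) (W.map A.mkQ) := by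
  refine ⟨Submodule.map_mono hV.1, ?_⟩
  rintro _ ⟨x, hx, rfl⟩ _ ⟨y, hy, rfl⟩
  exact ⟨⟨br x y, (hV.2 x hx y hy).1, rfl⟩, ⟨br y x, (hV.2 x hx y hy).2, rfl⟩⟩

theorem brSpan_map (V W : Submodule F L) :
    (brSpan br V W).map A.mkQ = brSpan (quotBr br A hA) (V.map A.mkQ) (W.map A.mkQ) := by
  apply le_antisymm
  · refine Submodule.map_le_iff_le_comap.2 (brSpan_le.2 fun x hx y hy => ?_)
    exact mem_brSpan (quotBr br A hA) (Submodule.mem_map_of_mem hx) (Submodule.mem_map_of_mem hy)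
  · refine brSpan_le.2 ?_
    rintro _ ⟨x, hx, rfl⟩ _ ⟨y, hy, rfl⟩
    exact ⟨br x y, mem_brSpan br hx hy, rfl⟩

theorem lcs_map (V : Submodule F L) (n : ℕ) :
    (lcsOf br V n).map A.mkQ = lcsOf (quotBr br A hA) (V.map A.mkQ) n := by
  induction n with
  | zero => rfl
  | succ n ih => rw [lcsOf, brSpan_map hA, ih]; rfl

theorem derSeries_map (V : Submodule F L) (n : ℕ) :
    (derSeriesOf br V n).map A.mkQ = derSeriesOf (quotBr br A hA) (V.map A.mkQ) n := by
  induction n with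
  | zero => rfl
  | succ n ih => rw [derSeriesOf, brSpan_map hA, ih]; rfl

theorem solvable_quot (h : IsSolvableSub br ⊤) : IsSolvableSub (quotBr br A hA) ⊤ := by
  obtain ⟨n, hn⟩ := h
  refine ⟨n, ?_⟩
  have := derSeries_map hA ⊤ n
  rw [hn, Submodule.map_bot, Submodule.map_top, Submodule.range_mkQ] at this
  exact this.symm

theorem map_comap_mkQ (V : Submodule F (L ⧸ A)) : (V.comap A.mkQ).map A.mkQ = V :=
  Submodule.map_comap_eq_of_surjective (Submodule.mkQ_surjective A) V

/-- Maximal nilpotent subalgebras of a central quotient pull back to maximal nilpotent subalgebras. -/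
theorem maxNilpotent_comap (hc : ∀ a ∈ A, ∀ x, br x a = 0 ∧ br a x = 0)
    {U : Submodule F (L ⧸ A)} (hU : IsMaximalNilpotentSub (quotBr br A hA) U) :
    IsMaximalNilpotentSub br (U.comap A.mkQ) := by
  obtain ⟨h1, ⟨n, hn⟩, h3⟩ := hU
  refine ⟨subalg_comap hA h1, ⟨n + 1, ?_⟩, fun V hV ⟨m, hm⟩ hle => le_antisymm ?_ hle⟩
  · have h := lcs_map hA (U.comap A.mkQ) n
    rw [map_comap_mkQ, hn] at h
    refine eq_bot_iff.2 (brSpan_le.2 fun x hx y _ => ?_)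
    have hx' : A.mkQ x ∈ (⊥ : Submodule F (L ⧸ A)) := h.le (Submodule.mem_map_of_mem hx)
    rw [Submodule.mem_bot, Submodule.mkQ_apply, Submodule.Quotient.mk_eq_zero] at hx'
    rw [(hc x hx' y).2]
    exact zero_mem _
  · rw [← Submodule.map_le_iff_le_comap]
    refine (h3 _ (subalg_map hA hV) ⟨m, ?_⟩ ?_).le
    · rw [← lcs_map hA, hm, Submodule.map_bot]
    · rw [← map_comap_mkQ U]
      exact Submodule.map_mono hle

theorem maxSubalg_comap {U M : Submodule F (L ⧸ A)}
    (hM : IsMaximalSubalgOf (quotBr br A hA) M U) :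
    IsMaximalSubalgOf br (M.comap A.mkQ) (U.comap A.mkQ) := by
  obtain ⟨h1, h2, h3⟩ := hM
  refine ⟨subalg_comap hA h1, lt_of_le_of_ne (Submodule.comap_mono h2.le) fun h => ?_, ?_⟩
  · apply h2.ne
    rw [← map_comap_mkQ M, h, map_comap_mkQ]
  · intro K hK hMK hKU
    have hAK : A ≤ K := le_trans (fun a ha => by
      show A.mkQ a ∈ M
      rw [Submodule.mkQ_apply, (Submodule.Quotient.mk_eq_zero A).2 ha]
      exact zero_mem _) hMK
    have hKc : (K.map A.mkQ).comap A.mkQ = K := by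
      rw [Submodule.comap_map_mkQ, sup_eq_right.2 hAK]
    rw [← hKc]
    refine (h3 _ (subalg_map hA hK) ?_ (Submodule.map_le_iff_le_comap.2 hKU)).imp
      (congrArg _) (congrArg _)
    rw [← map_comap_mkQ M]
    exact Submodule.map_mono hMK

theorem weakCIdeal_map {M : Submodule F (L ⧸ A)} (hM : IsSubalg (quotBr br A hA) M)
    (h : IsWeakCIdeal br (M.comap A.mkQ)) : IsWeakCIdeal (quotBr br A hA) M := by
  obtain ⟨-, -, C, ⟨n, ch, rfl, hn, hch⟩, hsup, hinf⟩ := h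
  have htop : (⊤ : Submodule F L).map A.mkQ = ⊤ := by
    rw [Submodule.map_top, Submodule.range_mkQ]
  refine ⟨hM, le_top, (ch 0).map A.mkQ, ⟨n, fun i => (ch i).map A.mkQ, rfl, ?_, fun i hi =>
    idealOf_map hA (hch i hi)⟩, ?_, ?_⟩
  · simp only [hn, htop]
  · rw [← map_comap_mkQ M, ← Submodule.map_sup, hsup, htop]
  · rintro _ ⟨hx, c, hcC, rfl⟩
    have hcore : (leibCore br (M.comap A.mkQ)).map A.mkQ ≤ leibCore (quotBr br A hA) M := by
      refine le_sSup ⟨?_, ?_⟩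
      · have := idealOf_map hA (leibCore_isIdeal br (M.comap A.mkQ))
        rwa [htop] at this
      · exact Submodule.map_le_iff_le_comap.2 (leibCore_le br _)
    exact hcore (Submodule.mem_map_of_mem (hinf ⟨hx, hcC⟩))

end Quot

/-! ### The chain of ideals -/

/-- Every proper ideal `J` of `L` is an ideal of codimension one in a larger one. -/
theorem exists_step [FiniteDimensional F L] {br : L →ₗ[F] L →ₗ[F] L}
    (hbr : IsSymmetricLeibnizBracket br) (hsolv : IsSolvableSub br ⊤)
    (h : ∀ U : Submodule F L, IsMaximalNilpotentSub br U →
        ∀ M : Submodule F L, IsMaximalSubalgOf br M U → IsWeakCIdeal br M)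
    {J : Submodule F L} (hJ : IsLeibIdeal br J) (hne : J ≠ ⊤) :
    ∃ J', IsLeibIdeal br J' ∧ J ≤ J' ∧ Module.finrank F J' = Module.finrank F J + 1 := by
  set I := leibnizKernel br with hI
  have hc : ∀ a ∈ I, ∀ x, br x a = 0 ∧ br a x = 0 := fun a ha x => kernel_central hbr ha x
  have hIid := kernel_ideal hbr
  have hanti : ∀ x y, br x y + br y x ∈ I := by
    intro x y
    have hsq : ∀ z, br z z ∈ I := fun z => Submodule.subset_span ⟨z, rfl⟩
    have h' := sub_mem (sub_mem (hsq (x + y)) (hsq x)) (hsq y)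
    have e : br (x + y) (x + y) - br x x - br y y = br x y + br y x := by
      simp only [map_add, LinearMap.add_apply]; abel
    rwa [e] at h'
  have key : ∃ v, v ∉ J ∧ ∀ x, ∃ c : F, br x v - c • v ∈ J ∧ br v x + c • v ∈ J := by
    by_cases hIJ : I ≤ J
    · have hse := lie_main (lieB_quot hbr) (solvable_quot hIid hsolv) fun U hU M hM =>
        weakCIdeal_map hIid hM.1 (h _ (maxNilpotent_comap hIid hc hU) _ (maxSubalg_comap hIid hM))
      have hJc : (J.map I.mkQ).comap I.mkQ = J := by
        rw [Submodule.comap_map_mkQ, sup_eq_right.2 hIJ]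
      have hJid : Id (quotBr br I hIid) (J.map I.mkQ) := by
        intro x y hy
        obtain ⟨x, rfl⟩ := Submodule.mkQ_surjective _ x
        obtain ⟨y, hy, rfl⟩ := hy
        exact ⟨br x y, (hJ.2 y hy x trivial).2, rfl⟩
      obtain ⟨v, -, hv, hx⟩ := hse _ hJid bot_le fun hle => hne (by
        rw [← hJc, top_le_iff.1 hle, Submodule.comap_top])
      obtain ⟨v, rfl⟩ := Submodule.mkQ_surjective _ v
      refine ⟨v, fun h' => hv (Submodule.mem_map_of_mem h'), fun x => ?_⟩
      obtain ⟨c, hc'⟩ := hx (I.mkQ x)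
      have h1 : br x v - c • v ∈ J := by
        rw [← hJc]; exact hc'
      refine ⟨c, h1, ?_⟩
      have h2 := sub_mem (hIJ (hanti v x)) h1
      have e : br v x + br x v - (br x v - c • v) = br v x + c • v := by abel
      rwa [e] at h2
    · obtain ⟨v, hv, hvJ⟩ := SetLike.not_le_iff_exists.1 hIJ
      refine ⟨v, hvJ, fun x => ⟨0, ?_⟩⟩
      rw [(hc v hv x).1, (hc v hv x).2, zero_smul, sub_zero, add_zero]
      exact ⟨zero_mem _, zero_mem _⟩
  obtain ⟨v, hv, hx⟩ := key
  have hvs : v ∈ J ⊔ span F {v} :=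
    Submodule.mem_sup_right (Submodule.mem_span_singleton_self v)
  refine ⟨J ⊔ span F {v}, ⟨le_top, fun y hy x _ => ?_⟩, le_sup_left, ?_⟩
  · obtain ⟨a, ha, z, hz, rfl⟩ := Submodule.mem_sup.1 hy
    obtain ⟨t, rfl⟩ := Submodule.mem_span_singleton.1 hz
    obtain ⟨c, h1, h2⟩ := hx x
    have hl : br v x ∈ J ⊔ span F {v} := by
      have := sub_mem (Submodule.mem_sup_left h2) (Submodule.smul_mem _ c hvs)
      rwa [add_sub_cancel_right] at this
    have hr : br x v ∈ J ⊔ span F {v} := by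
      have := add_mem (Submodule.mem_sup_left h1) (Submodule.smul_mem _ c hvs)
      rwa [sub_add_cancel] at this
    obtain ⟨h3, h4⟩ := hJ.2 a ha x trivial
    rw [map_add, map_add, map_smul, map_smul, LinearMap.add_apply, LinearMap.smul_apply]
    exact ⟨add_mem (Submodule.mem_sup_left h3) (Submodule.smul_mem _ t hl),
      add_mem (Submodule.mem_sup_left h4) (Submodule.smul_mem _ t hr)⟩
  · have hdis : J ⊓ span F {v} = ⊥ := by
      refine eq_bot_iff.2 fun w hw => ?_
      obtain ⟨t, rfl⟩ := Submodule.mem_span_singleton.1 hw.2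
      by_cases ht : t = 0
      · rw [ht, zero_smul]; exact zero_mem _
      · exact absurd ((J.smul_mem_iff ht).1 hw.1) hv
    have := Submodule.finrank_sup_add_finrank_inf_eq J (span F {v})
    rw [hdis, finrank_bot, add_zero, finrank_span_singleton] at this
    · exact this
    · rintro rfl
      exact hv (zero_mem _)

/-- If every proper ideal has codimension one in some ideal, then `L` is supersolvable. -/
theorem exists_chain [FiniteDimensional F L] {br : L →ₗ[F] L →ₗ[F] L}
    (step : ∀ J : Submodule F L, IsLeibIdeal br J → J ≠ ⊤ →
      ∃ J', IsLeibIdeal br J' ∧ J ≤ J' ∧ Module.finrank F J' = Module.finrank F J + 1) :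
    IsSupersolvable br := by
  classical
  choose! g hg1 hg2 hg3 using step
  have h0 : IsLeibIdeal br ⊥ := by
    refine ⟨le_top, fun x hx y _ => ?_⟩
    rw [(Submodule.mem_bot F).1 hx, map_zero, LinearMap.zero_apply, map_zero]
    exact ⟨zero_mem _, zero_mem _⟩
  let ch : ℕ → Submodule F L := fun i => g^[i] ⊥
  have hs : ∀ i, ch (i + 1) = g (ch i) := fun i => Function.iterate_succ_apply' g i ⊥
  have key : ∀ i, i ≤ Module.finrank F L → IsLeibIdeal br (ch i) ∧ Module.finrank F (ch i) = i := by
    intro i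
    induction i with
    | zero => exact fun _ => ⟨h0, finrank_bot F L⟩
    | succ i ih =>
      intro hi
      obtain ⟨h1, h2⟩ := ih (by omega)
      have hne : ch i ≠ ⊤ := by
        intro h
        rw [h, finrank_top] at h2
        omega
      rw [hs]
      exact ⟨hg1 _ h1 hne, by rw [hg3 _ h1 hne, h2]⟩
  refine ⟨Module.finrank F L, ch, rfl, Submodule.eq_top_of_finrank_eq (key _ le_rfl).2,
    fun i hi => (key i hi).1, fun i hi => ⟨?_, ?_⟩⟩
  · obtain ⟨h1, h2⟩ := key i hi.le
    rw [hs]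
    refine hg2 _ h1 fun h => ?_
    rw [h, finrank_top] at h2
    omega
  · rw [(key i hi.le).2, (key (i + 1) hi).2]

end WeakC

/-- a solvable symmetric Leibniz algebra in which every maximal
subalgebra of each maximal nilpotent subalgebra is a weak c-ideal is
supersolvable. -/
theorem supersolvable_of_weakCIdeals (br : L →ₗ[F] L →ₗ[F] L)
    (hbr : IsSymmetricLeibnizBracket br) [FiniteDimensional F L]
    (hsolv : IsSolvableSub br ⊤)
    (h : ∀ U : Submodule F L, IsMaximalNilpotentSub br U →
        ∀ M : Submodule F L, IsMaximalSubalgOf br M U → IsWeakCIdeal br M) :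
    IsSupersolvable br := by
  exact WeakC.exists_chain fun _ hJ hne => WeakC.exists_step hbr hsolv h hJ hne
end

section
/- For a one-dimensional subalgebra Fx of a finite-dimensional Leibniz algebra L, the following are equivalent: (i) Fx is a weak c-ideal of L; (ii) Fx is a c-ideal of L; (iii) either Fx is an ideal of L, or there is an ideal B of L with L = B ⊕ Fx (vector space direct sum) and x ∉ L². -/
/-! If `Fx + C = L` then `C` has codimension at most one, so a chain of relative ideals from `C` to
`L` passes through nothing but `C` and `L`; hence a subideal `C` with this property is an ideal
(`isLeibIdeal_of_isSubideal`). This gives (i) ⇒ (ii).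

For (ii) ⇒ (iii), suppose `Fx` is not an ideal. Then its core does not contain `x`
(`mem_leibCore_span_iff`), so the ideal `C` supplementing `Fx` misses `x`, and `L = C ⊕ Fx`.
Moreover `[x,x] = 0` (`br_self_eq_zero`): `Fx` is a subalgebra, so `[x,x] = cx`, and the Leibniz
identity at `x, x, x` reads `c²x = [x,[x,x]] = 0`. Hence `L² = [C + Fx, C + Fx] ⊆ C`
(`brSpan_top_le`), and `x ∉ L²`. The converses are immediate from the definitions. -/

open Submodule

variable {F : Type*} [Field F] {L : Type*} [AddCommGroup L] [Module F L]

theorem mem_leibCore_span_iff (br : L →ₗ[F] L →ₗ[F] L) (x : L) :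
    x ∈ leibCore br (span F {x}) ↔ IsLeibIdeal br (span F {x}) := by
  constructor
  · intro h
    have h1 : leibCore br (span F {x}) = span F {x} :=
      le_antisymm (sSup_le fun _ hA => hA.2) ((span_singleton_le_iff_mem _ _).2 h)
    exact h1 ▸ leibCore_isIdeal br (span F {x})
  · intro h
    have h1 : span F {x} ≤ leibCore br (span F {x}) := le_sSup ⟨h, le_rfl⟩
    exact h1 (mem_span_singleton_self x)

/-- A space `C` with `Fx + C = L` has codimension at most one. -/
theorem eq_or_eq_top_of_span_sup {x : L} {C D : Submodule F L}
    (hC : span F {x} ⊔ C = ⊤) (hCD : C ≤ D) : D = C ∨ D = ⊤ := by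
  by_cases hxD : x ∈ D
  · right
    rw [eq_top_iff, ← hC]
    exact sup_le ((span_singleton_le_iff_mem _ _).2 hxD) hCD
  · left
    refine le_antisymm (fun d hd => ?_) hCD
    have hd' : d ∈ span F {x} ⊔ C := hC ▸ mem_top
    obtain ⟨y, hy, k, hk, rfl⟩ := mem_sup.1 hd'
    obtain ⟨c, rfl⟩ := mem_span_singleton.1 hy
    have h1 : c • x ∈ D := by simpa using sub_mem hd (hCD hk)
    have hc : c = 0 := by
      by_contra hc
      exact hxD ((D.smul_mem_iff hc).1 h1)
    simpa [hc] using hk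

/-- A subideal of codimension at most one is an ideal. -/
theorem isLeibIdeal_of_isSubideal (br : L →ₗ[F] L →ₗ[F] L) {x : L} {C : Submodule F L}
    (hC : span F {x} ⊔ C = ⊤) (h : IsSubideal br C) : IsLeibIdeal br C := by
  obtain ⟨n, ch, h0, hn, hch⟩ := h
  induction n generalizing ch with
  | zero =>
    have : C = ⊤ := h0.symm.trans hn
    subst this
    exact ⟨le_rfl, fun _ _ _ _ => ⟨trivial, trivial⟩⟩
  | succ n ih =>
    have h1 : IsIdealOf br C (ch 1) := h0 ▸ hch 0 n.succ_pos
    rcases eq_or_eq_top_of_span_sup hC h1.1 with h2 | h2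
    · exact ih (fun i => ch (i + 1)) h2 hn fun i hi => hch (i + 1) (by lia)
    · rwa [h2] at h1

theorem br_self_eq_zero {br : L →ₗ[F] L →ₗ[F] L} (hbr : IsLeibnizBracket br) {x : L}
    (hx : x ≠ 0) (hsub : IsSubalg br (span F {x})) : br x x = 0 := by
  obtain ⟨c, hc⟩ := mem_span_singleton.1
    (hsub x (mem_span_singleton_self x) x (mem_span_singleton_self x))
  have h := hbr x x x
  rw [sub_self, ← hc, map_smul, ← hc, smul_smul] at h
  have hc0 : c = 0 := by simpa [hx] using h
  rw [← hc, hc0, zero_smul]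

theorem brSpan_top_le {br : L →ₗ[F] L →ₗ[F] L} {x : L} {C : Submodule F L}
    (hxx : br x x = 0) (hC : span F {x} ⊔ C = ⊤) (hI : IsLeibIdeal br C) :
    brSpan br ⊤ ⊤ ≤ C := by
  refine span_le.2 ?_
  rintro _ ⟨a, -, b, -, rfl⟩
  have ha : a ∈ span F {x} ⊔ C := hC ▸ mem_top
  have hb : b ∈ span F {x} ⊔ C := hC ▸ mem_top
  obtain ⟨y, hy, k, hk, rfl⟩ := mem_sup.1 ha
  obtain ⟨z, hz, l, hl, rfl⟩ := mem_sup.1 hb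
  obtain ⟨c, rfl⟩ := mem_span_singleton.1 hy
  obtain ⟨d, rfl⟩ := mem_span_singleton.1 hz
  have h : br (c • x + k) (d • x + l) = br (c • x) l + br k (d • x + l) := by
    simp [hxx]
  rw [h]
  exact add_mem (hI.2 l hl _ trivial).2 (hI.2 k hk _ trivial).1


/-- for a one-dimensional subalgebra `Fx`, being a weak c-ideal,
being a c-ideal, and the explicit condition (iii) are all equivalent. -/
theorem one_dim_weakCIdeal_tfae (br : L →ₗ[F] L →ₗ[F] L) (hbr : IsLeibnizBracket br)
    [FiniteDimensional F L] (x : L) (hx : x ≠ 0)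
    (hsub : IsSubalg br (Submodule.span F {x})) :
    (IsWeakCIdeal br (Submodule.span F {x}) ↔ IsCIdeal br (Submodule.span F {x})) ∧
    (IsCIdeal br (Submodule.span F {x}) ↔
      (IsLeibIdeal br (Submodule.span F {x}) ∨
        ∃ B : Submodule F L, IsLeibIdeal br B ∧
          B ⊔ Submodule.span F {x} = ⊤ ∧ B ⊓ Submodule.span F {x} = ⊥ ∧
          x ∉ brSpan br ⊤ ⊤)) := by
  have top_ideal : IsLeibIdeal br (⊤ : Submodule F L) :=
    ⟨le_rfl, fun _ _ _ _ => ⟨trivial, trivial⟩⟩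
  -- An ideal `Fx` is its own core, so `K = L` witnesses the c-ideal property.
  have ideal_c (h : IsLeibIdeal br (span F {x})) : IsCIdeal br (span F {x}) :=
    ⟨hsub, ⊤, top_ideal, sup_top_eq _, inf_le_left.trans (le_sSup ⟨h, le_rfl⟩)⟩
  refine ⟨⟨?_, ?_⟩, ?_, ?_⟩
  · rintro ⟨-, -, C, hC, hsup, hinf⟩
    exact ⟨hsub, C, isLeibIdeal_of_isSubideal br hsup hC, hsup, hinf⟩
  · rintro ⟨-, K, hK, hsup, hinf⟩
    refine ⟨hsub, le_top, K, ⟨1, fun i => if i = 0 then K else ⊤, rfl, rfl, ?_⟩,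
      hsup, hinf⟩
    intro i hi
    obtain rfl : i = 0 := by lia
    exact hK
  · rintro ⟨-, K, hK, hsup, hinf⟩
    by_cases hid : IsLeibIdeal br (span F {x})
    · exact Or.inl hid
    · have hxK : x ∉ K := fun h =>
        hid ((mem_leibCore_span_iff br x).1 (hinf ⟨mem_span_singleton_self x, h⟩))
      refine Or.inr ⟨K, hK, by rwa [sup_comm], ?_, fun h =>
        hxK (brSpan_top_le (br_self_eq_zero hbr hx hsub) hsup hK h)⟩
      exact ((disjoint_span_singleton' hx).2 hxK).eq_bot
  · rintro (h | ⟨B, hB, hsup, hinf, -⟩)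
    · exact ideal_c h
    · exact ⟨hsub, B, hB, by rwa [sup_comm], by rw [inf_comm, hinf]; exact bot_le⟩
end

section
/- Let L = ⟨x⟩ be a cyclic Leibniz algebra (generated by a single element x). Then every one-dimensional subalgebra of L is a c-ideal of L if and only if dim L ≤ 2. -/
/-!
Write `x² = [x, x]`. The (right) Leibniz identity gives `[a, x²] = 0` for every `a`.

Suppose every one-dimensional subalgebra is a c-ideal. If `x² ≠ 0`, then `B = ⟨x²⟩` is a subalgebra;
let `K` be an ideal with `B + K = L` and `B ∩ K ⊆ B_L`. Writing `x = c x² + k` with `k ∈ K` gives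
`x² = [x, k] ∈ K`, so `B ⊆ B_L` and `B` is an ideal. Hence `⟨x, x²⟩` is a subalgebra containing `x`,
so it is all of `L` and `dim L ≤ 2`.

Suppose `dim L ≤ 2`. Then `L = ⟨x, x²⟩` (`span_pair_eq_top`) and `⟨x²⟩` is an ideal
(`isLeibIdeal_span_sq`). A one-dimensional subalgebra inside `⟨x²⟩` equals it, hence is an ideal,
and ideals are c-ideals; any other one has `⟨x²⟩` as a complement.
-/


open Submodule

variable {F : Type*} [Field F] {L : Type*} [AddCommGroup L] [Module F L]

theorem br_sq_right {br : L →ₗ[F] L →ₗ[F] L} (hbr : IsLeibnizBracket br) (a x : L) :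
    br a (br x x) = 0 := by
  rw [hbr a x x, sub_self]

theorem isSubalg_span_singleton {br : L →ₗ[F] L →ₗ[F] L} {x : L}
    (h : br x x ∈ span F {x}) : IsSubalg br (span F {x}) := by
  intro u hu v hv
  obtain ⟨a, rfl⟩ := mem_span_singleton.1 hu
  obtain ⟨b, rfl⟩ := mem_span_singleton.1 hv
  simp only [map_smul, LinearMap.smul_apply]
  exact smul_mem _ _ (smul_mem _ _ h)

/-- If `x` and `x²` are dependent then `⟨x⟩` is already a subalgebra, so it is `L`; otherwise
the dimension bound makes them a basis. -/
theorem span_pair_eq_top {br : L →ₗ[F] L →ₗ[F] L} [FiniteDimensional F L] {x : L}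
    (hcyc : ∀ B : Submodule F L, IsSubalg br B → x ∈ B → B = ⊤)
    (hd : Module.finrank F L ≤ 2) : span F {x, br x x} = ⊤ := by
  by_cases h : br x x ∈ span F {x}
  · rw [eq_top_iff, ← hcyc _ (isSubalg_span_singleton h) (mem_span_singleton_self x)]
    exact span_mono (by simp)
  · have hx : x ≠ 0 := by
      rintro rfl
      simp at h
    have hli : LinearIndependent F ![x, br x x] := by
      rw [LinearIndependent.pair_iff' hx]
      exact fun a ha => h (mem_span_singleton.2 ⟨a, ha⟩)
    have hc : Fintype.card (Fin 2) = Module.finrank F L :=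
      le_antisymm hli.fintype_card_le_finrank (by simpa using hd)
    simpa [Matrix.range_cons, Matrix.range_empty, Set.pair_comm] using
      hli.span_eq_top_of_card_eq_finrank' hc

theorem isLeibIdeal_span_sq {br : L →ₗ[F] L →ₗ[F] L} (hbr : IsLeibnizBracket br) {x : L}
    (ht : span F {x, br x x} = ⊤) : IsLeibIdeal br (span F {br x x}) := by
  have hcube : br (br x x) x ∈ span F {br x x} := by
    obtain ⟨m, l, hml⟩ := mem_span_pair.1 (ht ▸ mem_top : br (br x x) x ∈ span F {x, br x x})
    have h0 : br x (br (br x x) x) = 0 := by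
      rw [hbr x (br x x) x]
      simp [br_sq_right hbr]
    -- Bracketing `x³ = m x + l x²` with `x` on the left shows `m x² = 0`.
    rw [← hml] at h0
    simp only [map_add, map_smul, br_sq_right hbr, smul_zero, add_zero, smul_eq_zero] at h0
    rcases h0 with h0 | h0
    · rw [← hml, h0]
      exact mem_span_singleton.2 ⟨l, by simp⟩
    · simp [h0]
  refine ⟨le_top, fun u hu v _ => ?_⟩
  obtain ⟨c, rfl⟩ := mem_span_singleton.1 hu
  obtain ⟨a, b, rfl⟩ := mem_span_pair.1 (ht ▸ mem_top : v ∈ span F {x, br x x})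
  refine ⟨?_, by rw [map_smul, br_sq_right hbr, smul_zero]; exact zero_mem _⟩
  simp only [map_add, map_smul, LinearMap.smul_apply, br_sq_right hbr, smul_zero, add_zero]
  exact smul_mem _ _ (smul_mem _ _ hcube)

theorem IsLeibIdeal.isCIdeal {br : L →ₗ[F] L →ₗ[F] L} {B : Submodule F L}
    (hB : IsLeibIdeal br B) : IsCIdeal br B := by
  refine ⟨fun u hu v _ => (hB.2 u hu v trivial).1, ⊤,
    ⟨le_rfl, fun _ _ _ _ => ⟨trivial, trivial⟩⟩, by simp, ?_⟩
  exact inf_le_left.trans (le_sSup (show B ∈ {A | IsIdealOf br A ⊤ ∧ A ≤ B} from ⟨hB, le_rfl⟩))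

/-- in a cyclic Leibniz algebra `L = ⟨x⟩`, every one-dimensional
subalgebra is a c-ideal iff `dim L ≤ 2`. -/
theorem cyclic_one_dim_cIdeal_iff (br : L →ₗ[F] L →ₗ[F] L) (hbr : IsLeibnizBracket br)
    [FiniteDimensional F L] (x : L)
    (hcyc : ∀ B : Submodule F L, IsSubalg br B → x ∈ B → B = ⊤) :
    (∀ y : L, y ≠ 0 → IsSubalg br (Submodule.span F {y}) →
        IsCIdeal br (Submodule.span F {y})) ↔
    Module.finrank F L ≤ 2 := by
  constructor
  · intro h
    have hcube : br (br x x) x ∈ span F {br x x} := by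
      by_cases h0 : br x x = 0
      · simp [h0]
      obtain ⟨-, K, hK, hsup, hinf⟩ := h (br x x) h0
        (isSubalg_span_singleton (by simp [br_sq_right hbr]))
      obtain ⟨u, hu, k, hk, huk⟩ := mem_sup.1 (hsup ▸ mem_top : x ∈ span F {br x x} ⊔ K)
      obtain ⟨c, rfl⟩ := mem_span_singleton.1 hu
      have hxk : br x k = br x x := by
        conv_rhs => arg 2; rw [← huk]
        simp [br_sq_right hbr]
      have hxK : br x x ∈ K := hxk ▸ (hK.2 k hk x trivial).2
      have hcore : br x x ∈ leibCore br (span F {br x x}) :=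
        hinf ⟨mem_span_singleton_self _, hxK⟩
      exact (sSup_le fun A hA => hA.2 : leibCore br (span F {br x x}) ≤ _)
        ((leibCore_isIdeal br _).2 _ hcore x trivial).1
    have htop : span F {x, br x x} = ⊤ := by
      refine hcyc _ ?_ (subset_span (by simp))
      have h2 : br x x ∈ span F {x, br x x} := subset_span (by simp)
      have h3 : br (br x x) x ∈ span F {x, br x x} := span_mono (by simp) hcube
      intro u hu v hv
      obtain ⟨a, b, rfl⟩ := mem_span_pair.1 hu
      obtain ⟨c, d, rfl⟩ := mem_span_pair.1 hv
      simp only [map_add, map_smul, LinearMap.add_apply, LinearMap.smul_apply, br_sq_right hbr,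
        smul_zero, add_zero]
      exact smul_mem _ _ (add_mem (smul_mem _ _ h2) (smul_mem _ _ h3))
    classical
    rw [← finrank_top, ← htop]
    have := finrank_span_finset_le_card (R := F) ({x, br x x} : Finset L)
    rw [Finset.coe_pair] at this
    exact this.trans Finset.card_le_two
  · intro hd y hy hsub
    have ht := span_pair_eq_top hcyc hd
    have hI := isLeibIdeal_span_sq hbr ht
    by_cases hyK : y ∈ span F {br x x}
    · apply IsLeibIdeal.isCIdeal
      obtain ⟨c, rfl⟩ := mem_span_singleton.1 hyK
      rwa [span_singleton_smul_eq (IsUnit.mk0 c (left_ne_zero_of_smul hy))]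
    · refine ⟨hsub, _, hI, ?_, ?_⟩
      · obtain ⟨a, b, hab⟩ := mem_span_pair.1 (ht ▸ mem_top : y ∈ span F {x, br x x})
        have ha : a ≠ 0 := by
          rintro rfl
          exact hyK (mem_span_singleton.2 ⟨b, by simpa using hab⟩)
        have h2 : br x x ∈ span F {y} ⊔ span F {br x x} :=
          mem_sup_right (mem_span_singleton_self _)
        rw [eq_top_iff, ← ht, span_le, Set.insert_subset_iff, Set.singleton_subset_iff]
        refine ⟨(smul_mem_iff _ ha).1 ?_, h2⟩
        rw [eq_sub_of_add_eq hab]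
        exact sub_mem (mem_sup_left (mem_span_singleton_self y)) (smul_mem _ _ h2)
      · rintro z ⟨hz, hzK⟩
        obtain ⟨c, rfl⟩ := mem_span_singleton.1 hz
        by_cases hc : c = 0
        · simp [hc]
        · exact absurd ((smul_mem_iff _ hc).1 hzK) hyK
end

section
/- Let L be the three-dimensional Leibniz algebra over a field of characteristic ≠ 2 with basis a, b, x and nonzero products [a,a] = b, [a,x] = (1/2)a, [x,a] = -(1/2)a, [b,x] = b. Then every one-dimensional subalgebra of L is a c-ideal of L, yet L³ ≠ 0 and L is not a direct sum of an abelian ideal and an almost abelian ideal. -/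
/-!
Two ideals of `L` carry the argument: `⟨a, b⟩` and `⟨b⟩`. If `u` spans a subalgebra, then either
its `x`-coordinate is nonzero and `⟨a, b⟩` is an ideal complement of `⟨u⟩`, or `[u, u] ∈ ⟨u⟩`
forces `u` to be a multiple of `b`, so that `⟨u⟩` is itself an ideal. Also `b = [[a, a], x] ∈ L³`.

Every nonzero ideal contains `b` (`b_mem_of_isLeibIdeal`), so in a direct sum decomposition
`L = A ⊕ B` into ideals with `B ≠ 0` one has `A = 0` and `B = L`. But `L` is not almost abelian: if
`L = Fy ∔ D`, then `[d, y] = d` puts `D` inside `[L, L] ⊆ ⟨a, b⟩`, so `y` has nonzero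
`x`-coordinate and `a ∈ D`, contradicting `[a, a] = b ≠ 0` and `D` abelian.
-/

open Submodule

variable {F : Type*} [Field F] {L : Type*} [AddCommGroup L] [Module F L]

/-- `B` is an almost abelian subalgebra: `B = Fx ∔ D` with `D` abelian,
`[d,x] = d` for all `d ∈ D`, and `[x,d] = -d` (Lie case) or `[x,d] = 0`
(non-Lie case), all other products zero. -/
def IsAlmostAbelian (br : L →ₗ[F] L →ₗ[F] L) (B : Submodule F L) : Prop :=
  ∃ (x : L) (D : Submodule F L), x ∉ D ∧
    Submodule.span F {x} ⊔ D = B ∧ IsAbelianSub br D ∧ br x x = 0 ∧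
    (∀ d ∈ D, br d x = d) ∧
    ((∀ d ∈ D, br x d = -d) ∨ (∀ d ∈ D, br x d = 0))

/-- The bracket of the three-dimensional example: basis `a = e₀`, `b = e₁`,
`x = e₂` with `[a,a] = b`, `[a,x] = a/2`, `[x,a] = -a/2`, `[b,x] = b`. -/
def br3 (F : Type*) [Field F] : (Fin 3 → F) →ₗ[F] (Fin 3 → F) →ₗ[F] (Fin 3 → F) :=
  LinearMap.mk₂ F
    (fun u v => ![(u 0 * v 2 - u 2 * v 0) / 2, u 0 * v 0 + u 1 * v 2, 0])
    (by intro u u' v; funext i; fin_cases i <;> simp <;> ring)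
    (by intro c u v; funext i; fin_cases i <;> simp <;> ring)
    (by intro u v v'; funext i; fin_cases i <;> simp <;> ring)
    (by intro c u v; funext i; fin_cases i <;> simp <;> ring)

theorem br3_apply {F : Type*} [Field F] (u v : Fin 3 → F) :
    br3 F u v = ![(u 0 * v 2 - u 2 * v 0) / 2, u 0 * v 0 + u 1 * v 2, 0] := rfl

/-- The ideal `⟨a, b⟩`, as the kernel of the `x`-coordinate. -/
theorem isLeibIdeal_ker_proj_two (F : Type*) [Field F] :
    IsLeibIdeal (br3 F) (LinearMap.ker (LinearMap.proj 2 : (Fin 3 → F) →ₗ[F] F)) :=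
  ⟨le_top, fun u _ v _ => by simp [br3_apply]⟩

/-- A vector `u` with vanishing `a`- and `x`-coordinates is a multiple of `b`, so it spans an
ideal. -/
theorem isLeibIdeal_span_of_eq_zero {F : Type*} [Field F] {u : Fin 3 → F}
    (h0 : u 0 = 0) (h2 : u 2 = 0) : IsLeibIdeal (br3 F) (Submodule.span F {u}) := by
  refine ⟨le_top, fun w hw v _ => ?_⟩
  obtain ⟨c, rfl⟩ := Submodule.mem_span_singleton.1 hw
  constructor
  · refine Submodule.mem_span_singleton.2 ⟨c * v 2, ?_⟩
    funext i
    fin_cases i <;> simp [br3_apply, h0, h2]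
    ring
  · convert Submodule.zero_mem _
    funext i
    fin_cases i <;> simp [br3_apply, h0, h2]

/-- If `v ∈ A` has nonzero `x`-coordinate, then `[[v, a], a]` is a nonzero multiple of `b`;
if only the `a`-coordinate is nonzero, `[v, a]` is; otherwise `v` itself is. -/
theorem b_mem_of_isLeibIdeal {F : Type*} [Field F] (h2 : (2 : F) ≠ 0)
    {A : Submodule F (Fin 3 → F)} (hA : IsLeibIdeal (br3 F) A) (hne : A ≠ ⊥) :
    (![0, 1, 0] : Fin 3 → F) ∈ A := by
  obtain ⟨v, hv, hv0⟩ := A.exists_mem_ne_zero_of_ne_bot hne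
  have key : ∀ w ∈ A, w 0 = 0 → w 2 = 0 → w 1 ≠ 0 → (![0, 1, 0] : Fin 3 → F) ∈ A := by
    intro w hw h0 h2 h1
    convert A.smul_mem (w 1)⁻¹ hw using 1
    funext i
    fin_cases i <;> simp [h0, h1, h2]
  have h3 := (hA.2 v hv ![1, 0, 0] trivial).1
  by_cases hv2 : v 2 = 0
  · by_cases hv0' : v 0 = 0
    · refine key v hv hv0' hv2 fun hv1 => hv0 ?_
      funext i
      fin_cases i <;> simp [*]
    · exact key _ h3 (by simp [br3_apply, hv2]) (by simp [br3_apply]) (by simpa [br3_apply])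
  · exact key _ (hA.2 _ h3 ![1, 0, 0] trivial).1 (by simp [br3_apply]) (by simp [br3_apply])
      (by simp [br3_apply, hv2, h2])

/-- The algebra `L` itself is not almost abelian. -/
theorem not_isAlmostAbelian_top (F : Type*) [Field F] : ¬ IsAlmostAbelian (br3 F) ⊤ := by
  rintro ⟨y, D, -, hD, hab, -, hdy, -⟩
  have hD2 : ∀ d ∈ D, d 2 = 0 := fun d hd => by
    rw [← hdy d hd]
    simp [br3_apply]
  have hdec : ∀ v : Fin 3 → F, ∃ c : F, ∃ d ∈ D, c • y + d = v := fun v => by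
    obtain ⟨s, hs, d, hd, h⟩ := Submodule.mem_sup.1 (hD.symm ▸ Submodule.mem_top : v ∈ _)
    obtain ⟨c, rfl⟩ := Submodule.mem_span_singleton.1 hs
    exact ⟨c, d, hd, h⟩
  have hy2 : y 2 ≠ 0 := fun hy => by
    obtain ⟨c, d, hd, h⟩ := hdec ![0, 0, 1]
    simpa [hy, hD2 d hd] using congrFun h 2
  obtain ⟨c, d, hd, h⟩ := hdec ![1, 0, 0]
  have hc : c = 0 := by simpa [hD2 d hd, hy2] using congrFun h 2
  rw [hc, zero_smul, zero_add] at h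
  subst h
  simpa [br3_apply] using congrFun (hab _ hd _ hd) 1

/-- in the three-dimensional example (char ≠ 2), every
one-dimensional subalgebra is a c-ideal, yet `L³ ≠ 0` and `L` is not the
direct sum of an abelian ideal and an almost abelian ideal; this refutes
Turner's classification. -/
theorem turner_counterexample (F : Type*) [Field F] (h2 : (2 : F) ≠ 0) :
    (∀ x : Fin 3 → F, x ≠ 0 → IsSubalg (br3 F) (Submodule.span F {x}) →
        IsCIdeal (br3 F) (Submodule.span F {x})) ∧
    brSpan (br3 F) (brSpan (br3 F) ⊤ ⊤) ⊤ ≠ ⊥ ∧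
    ¬ ∃ A B : Submodule F (Fin 3 → F),
        IsLeibIdeal (br3 F) A ∧ IsAbelianSub (br3 F) A ∧
        IsLeibIdeal (br3 F) B ∧ IsAlmostAbelian (br3 F) B ∧
        A ⊔ B = ⊤ ∧ A ⊓ B = ⊥ := by
  refine ⟨fun u hu hsub => ⟨hsub, ?_⟩, fun h => ?_, ?_⟩
  · have hmem := Submodule.mem_span_singleton_self (R := F) u
    by_cases hu2 : u 2 = 0
    · obtain ⟨c, hc⟩ := Submodule.mem_span_singleton.1 (hsub u hmem u hmem)
      have hc0 := congrFun hc 0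
      have hc1 := congrFun hc 1
      simp only [br3_apply, hu2, Pi.smul_apply, smul_eq_mul, Matrix.cons_val] at hc0 hc1
      have hu0 : u 0 = 0 := by
        by_contra hne
        have : c = 0 := by simpa [hne] using hc0
        simp [this, hne] at hc1
      exact ⟨⊤, ⟨le_top, fun _ _ _ _ => ⟨trivial, trivial⟩⟩, sup_top_eq _,
        inf_le_left.trans (le_sSup ⟨isLeibIdeal_span_of_eq_zero hu0 hu2, le_rfl⟩)⟩
    · refine ⟨_, isLeibIdeal_ker_proj_two F, eq_top_iff.2 fun v _ => ?_, fun v hv => ?_⟩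
      · refine Submodule.mem_sup.2 ⟨(v 2 / u 2) • u, Submodule.smul_mem _ _ hmem,
          v - (v 2 / u 2) • u, ?_, by abel⟩
        simp [hu2]
      · obtain ⟨hv1, hv2⟩ := hv
        obtain ⟨c, rfl⟩ := Submodule.mem_span_singleton.1 hv1
        have hc : c = 0 := by simpa [hu2] using hv2
        simp [hc]
  · have hb : br3 F (br3 F ![1, 0, 0] ![1, 0, 0]) ![0, 0, 1] ∈
        brSpan (br3 F) (brSpan (br3 F) ⊤ ⊤) ⊤ :=
      Submodule.subset_span ⟨_, Submodule.subset_span ⟨_, trivial, _, trivial, rfl⟩,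
        _, trivial, rfl⟩
    rw [h, Submodule.mem_bot] at hb
    simpa [br3_apply] using congrFun hb 1
  · rintro ⟨A, B, hA, -, hB, hBa, hsup, hinf⟩
    have hBne : B ≠ ⊥ := by
      rintro rfl
      obtain ⟨y, D, hy, hD, -⟩ := hBa
      have hy0 : y ∈ (⊥ : Submodule F (Fin 3 → F)) :=
        hD ▸ Submodule.mem_sup_left (Submodule.mem_span_singleton_self y)
      rw [Submodule.mem_bot] at hy0
      exact hy (hy0 ▸ D.zero_mem)
    have hAbot : A = ⊥ := by
      by_contra hne
      have hb : (![0, 1, 0] : Fin 3 → F) ∈ A ⊓ B :=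
        ⟨b_mem_of_isLeibIdeal h2 hA hne, b_mem_of_isLeibIdeal h2 hB hBne⟩
      rw [hinf, Submodule.mem_bot] at hb
      simpa using congrFun hb 1
    rw [hAbot, bot_sup_eq] at hsup
    exact not_isAlmostAbelian_top F (hsup ▸ hBa)
end

section
/- Let L be a finite-dimensional Leibniz algebra in which every one-dimensional subalgebra is a c-ideal. Then every minimal abelian ideal of L is one-dimensional. -/
/-!
For `0 ≠ x ∈ A` the line `span {x}` is a subalgebra, since `A` is abelian. Let `K` be an ideal
complementing it as in the definition of a c-ideal. By minimality `A ⊓ K` is `⊥` or `A`. In the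
first case the modular law gives `A = span {x} ⊔ (A ⊓ K) = span {x}`. In the second `x ∈ K`, so
`span {x}` equals its core and is a nonzero ideal inside `A`; by minimality it is `A`.
-/

open Submodule

variable {F : Type*} [Field F] {L : Type*} [AddCommGroup L] [Module F L]

/-- if every one-dimensional subalgebra of `L` is a c-ideal,
then every minimal abelian ideal of `L` is one-dimensional. -/
theorem minimal_abelian_ideal_one_dim (br : L →ₗ[F] L →ₗ[F] L)
    (hbr : IsLeibnizBracket br) [FiniteDimensional F L]
    (h : ∀ x : L, x ≠ 0 → IsSubalg br (Submodule.span F {x}) →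
        IsCIdeal br (Submodule.span F {x}))
    (A : Submodule F L) (hA : IsMinimalAbelianIdeal br A) :
    Module.finrank F A = 1 := by
  obtain ⟨hAI, hA0, hab, hmin⟩ := hA
  obtain ⟨x, hxA, hx0⟩ := Submodule.exists_mem_ne_zero_of_ne_bot hA0
  have hle : Submodule.span F {x} ≤ A := (Submodule.span_singleton_le_iff_mem x A).2 hxA
  have hsub : IsSubalg br (Submodule.span F {x}) := fun a ha b hb => by
    rw [hab a (hle ha) b (hle hb)]
    exact zero_mem _
  obtain ⟨_, K, hK, hsup, hcore⟩ := h x hx0 hsub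
  suffices hspan : Submodule.span F {x} = A by
    rw [← hspan]
    exact finrank_span_singleton hx0
  have hAK : IsLeibIdeal br (A ⊓ K) :=
    ⟨le_top, fun a ha y hy =>
      ⟨⟨(hAI.2 a ha.1 y hy).1, (hK.2 a ha.2 y hy).1⟩,
        ⟨(hAI.2 a ha.1 y hy).2, (hK.2 a ha.2 y hy).2⟩⟩⟩
  rcases hmin _ hAK inf_le_left with hbot | hAle
  · have hmod := sup_inf_assoc_of_le K hle
    rw [hsup, top_inf_eq, inf_comm K A, hbot, sup_bot_eq] at hmod
    exact hmod.symm
  · have hxK : Submodule.span F {x} ≤ K := hle.trans (inf_eq_left.1 hAle)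
    have heq : leibCore br (Submodule.span F {x}) = Submodule.span F {x} :=
      le_antisymm (sSup_le fun _ hB => hB.2) ((le_inf le_rfl hxK).trans hcore)
    have hI : IsLeibIdeal br (Submodule.span F {x}) := heq ▸ leibCore_isIdeal br _
    exact (hmin _ hI hle).resolve_left fun h0 => hx0 (Submodule.span_singleton_eq_bot.1 h0)
end
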